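/- Identity theorem: Let Ω ⊆ M be a slice domain and let f, g : Ω → 𝔸 be left generalized partial-slice monogenic functions. If there exists ω ∈ 𝕊 such that f = g on some (p+1)-dimensional smooth submanifold contained in Ω_ω, then f = g on all of Ω. -/

import Mathlib

open scoped BigOperators
open Filter Topology

namespace GPSM

variable (A : Type*) [NormedAddCommGroup A] [NormedSpace ℝ A] [Mul A] [One A]

/-- `A` is a real alternative algebra with unit `1`, of finite dimension `d > 1`,
equipped with an anti-involution `conj` (a real-linear map with `(a^c)^c = a`,
`(ab)^c = b^c a^c`, fixing the reals).  The associator is alternating (left/right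
alternative laws). -/
structure IsAltStarAlg (conj : A → A) : Prop where
  finDim : FiniteDimensional ℝ A
  one_lt_finrank : 1 < Module.finrank ℝ A
  mul_add' : ∀ a b c : A, a * (b + c) = a * b + a * c
  add_mul' : ∀ a b c : A, (a + b) * c = a * c + b * c
  smul_mul' : ∀ (r : ℝ) (a b : A), (r • a) * b = r • (a * b)
  mul_smul' : ∀ (r : ℝ) (a b : A), a * (r • b) = r • (a * b)
  one_mul' : ∀ a : A, 1 * a = a
  mul_one' : ∀ a : A, a * 1 = a
  alt_left : ∀ a b : A, a * (a * b) = a * a * b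
  alt_right : ∀ a b : A, a * b * b = a * (b * b)
  conj_add : ∀ a b : A, conj (a + b) = conj a + conj b
  conj_smul : ∀ (r : ℝ) (a : A), conj (r • a) = r • conj a
  conj_conj : ∀ a : A, conj (conj a) = a
  conj_mul : ∀ a b : A, conj (a * b) = conj b * conj a
  conj_one : conj 1 = 1

/-- `v 0, v 1, …, v m` is a hypercomplex basis of the hypercomplex subspace
`M = span(v 0, …, v m)` of `A`: `v 0 = 1`, `t(v s) = 0`, `n(v s) = 1`, the `v s`
anticommute for distinct `s, t ∈ {1,…,m}`, they are linearly independent, and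
`M` is contained in the quadratic cone `Q_A`. -/
structure IsHypBasis (conj : A → A) (v : ℕ → A) (m : ℕ) : Prop where
  v_zero : v 0 = 1
  trace_zero : ∀ s, 1 ≤ s → s ≤ m → v s + conj (v s) = 0
  norm_one : ∀ s, 1 ≤ s → s ≤ m → v s * conj (v s) = 1
  anticomm : ∀ s t, 1 ≤ s → s ≤ m → 1 ≤ t → t ≤ m → s ≠ t → v s * v t = -(v t * v s)
  indep : LinearIndependent ℝ (fun i : Fin (m + 1) => v i)
  mem_cone : ∀ x ∈ Submodule.span ℝ (Set.range fun i : Fin (m + 1) => v (i : ℕ)),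
      ∃ tr nr : ℝ, x + conj x = tr • (1 : A) ∧ x * conj x = nr • (1 : A) ∧
        ((∃ r : ℝ, x = r • (1 : A)) ∨ tr ^ 2 < 4 * nr)

variable {A}

/-- Identification of `ℝ^{m+1}` with the hypercomplex subspace `M`:
`(x_0,…,x_m) ↦ Σ x_s • v s`. -/
def emb (v : ℕ → A) (m : ℕ) (x : Fin (m + 1) → ℝ) : A :=
  ∑ s : Fin (m + 1), x s • v (s : ℕ)

/-- First `p+1` coordinates of a point of `M ≅ ℝ^{m+1}`, i.e. the `x_p`-part. -/
def projP (m p : ℕ) (x : Fin (m + 1) → ℝ) : Fin (p + 1) → ℝ := fun s =>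
  if h : (s : ℕ) < m + 1 then x ⟨(s : ℕ), h⟩ else 0

/-- Inclusion `ℝ^{p+1} ⊆ ℝ^{m+1}` (remaining coordinates `0`). -/
def injP (m p : ℕ) (y : Fin (p + 1) → ℝ) : Fin (m + 1) → ℝ := fun s =>
  if h : (s : ℕ) < p + 1 then y ⟨(s : ℕ), h⟩ else 0

/-- The coordinates of `x_q` (last `q = m - p` coordinates of `x`). -/
def xqpart (m p : ℕ) (x : Fin (m + 1) → ℝ) : Fin (m + 1) → ℝ := fun s =>
  if (s : ℕ) ≤ p then 0 else x s

/-- The coordinates of `x_p` inside `ℝ^{m+1}`. -/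
def xppart (m p : ℕ) (x : Fin (m + 1) → ℝ) : Fin (m + 1) → ℝ := fun s =>
  if (s : ℕ) ≤ p then x s else 0

/-- `r = |x_q|`. -/
noncomputable def rad (m p : ℕ) (x : Fin (m + 1) → ℝ) : ℝ :=
  Real.sqrt (∑ s : Fin (m + 1), (xqpart m p x s) ^ 2)

/-- `ω = x_q / |x_q|` (coordinates), `0` when `x_q = 0`. -/
noncomputable def normq (m p : ℕ) (x : Fin (m + 1) → ℝ) : Fin (m + 1) → ℝ :=
  (rad m p x)⁻¹ • xqpart m p x

/-- The reflection `x = x_p + x_q ↦ x_⋄ = x_p - x_q`. -/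
def reflP (m p : ℕ) (x : Fin (m + 1) → ℝ) : Fin (m + 1) → ℝ := fun s =>
  if (s : ℕ) ≤ p then x s else -x s

/-- The sphere `𝕊 = {x_q ∈ span(v_{p+1},…,v_m) : x_q² = -1}`, in coordinates. -/
def Sph (v : ℕ → A) (m p : ℕ) : Set (Fin (m + 1) → ℝ) :=
  {w | (∀ s : Fin (m + 1), (s : ℕ) ≤ p → w s = 0) ∧ emb v m w * emb v m w = -1}

/-- The point `x_p + r ω` of `M ≅ ℝ^{m+1}`. -/
def pt (m p : ℕ) (w : Fin (m + 1) → ℝ) (y : Fin (p + 1) → ℝ) (r : ℝ) :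
    Fin (m + 1) → ℝ :=
  injP m p y + r • w

/-- The slice `Ω_ω ⊆ ℝ^{p+2}` of `Ω` at `ω`. -/
def sliceSet (m p : ℕ) (Ω : Set (Fin (m + 1) → ℝ)) (w : Fin (m + 1) → ℝ) :
    Set ((Fin (p + 1) → ℝ) × ℝ) := {z | pt m p w z.1 z.2 ∈ Ω}

/-- The restriction `f_ω` of `f` to the slice at `ω`, as a function on `ℝ^{p+2}`. -/
def sliceFun (m p : ℕ) (f : (Fin (m + 1) → ℝ) → A) (w : Fin (m + 1) → ℝ) :
    (Fin (p + 1) → ℝ) × ℝ → A := fun z => f (pt m p w z.1 z.2)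

/-- Partial derivative `∂_{x_s}` of a function on `ℝ^{m+1}`. -/
noncomputable def pdF (m : ℕ) (s : Fin (m + 1)) (f : (Fin (m + 1) → ℝ) → A)
    (x : Fin (m + 1) → ℝ) : A := fderiv ℝ f x (Pi.single s 1)

/-- Partial derivative `∂_{x_s}` of a function on `ℝ^{p+1}`. -/
noncomputable def pdP (p : ℕ) (s : Fin (p + 1)) (g : (Fin (p + 1) → ℝ) → A)
    (y : Fin (p + 1) → ℝ) : A := fderiv ℝ g y (Pi.single s 1)

/-- Partial derivative `∂_{x_s}` of a function on `ℝ^{p+2} = ℝ^{p+1} × ℝ`. -/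
noncomputable def pdSx (p : ℕ) (s : Fin (p + 1)) (G : (Fin (p + 1) → ℝ) × ℝ → A)
    (z : (Fin (p + 1) → ℝ) × ℝ) : A := fderiv ℝ G z (Pi.single s 1, 0)

/-- Partial derivative `∂_r` of a function on `ℝ^{p+2} = ℝ^{p+1} × ℝ`. -/
noncomputable def pdSr (p : ℕ) (G : (Fin (p + 1) → ℝ) × ℝ → A)
    (z : (Fin (p + 1) → ℝ) × ℝ) : A := fderiv ℝ G z (0, 1)

/-- Second partial derivative `∂_r²`. -/
noncomputable def pdSr2 (p : ℕ) (G : (Fin (p + 1) → ℝ) × ℝ → A)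
    (z : (Fin (p + 1) → ℝ) × ℝ) : A := pdSr p (pdSr p G) z

/-- The operator `Σ_{lo ≤ s ≤ hi} v_s ∂_{x_s}` on functions on `ℝ^{m+1}`.
`Dop v m 0 p` is `D_{x_p}`, `Dop v m (p+1) m` is `D_{x_q}`, `Dop v m 0 m` is `D_x`. -/
noncomputable def Dop (v : ℕ → A) (m lo hi : ℕ) (f : (Fin (m + 1) → ℝ) → A)
    (x : Fin (m + 1) → ℝ) : A :=
  ∑ s : Fin (m + 1), if lo ≤ (s : ℕ) ∧ (s : ℕ) ≤ hi then v (s : ℕ) * pdF m s f x else 0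

/-- The conjugate operator `∂_{x_0} - Σ_{1 ≤ s ≤ hi} v_s ∂_{x_s}` on functions on
`ℝ^{m+1}`; `Dbarop v m p` is `D̄_{x_p}`, `Dbarop v m m` is `D̄_x`. -/
noncomputable def Dbarop (v : ℕ → A) (m hi : ℕ) (f : (Fin (m + 1) → ℝ) → A)
    (x : Fin (m + 1) → ℝ) : A :=
  pdF m 0 f x -
    ∑ s : Fin (m + 1), if 1 ≤ (s : ℕ) ∧ (s : ℕ) ≤ hi then v (s : ℕ) * pdF m s f x else 0

/-- The operator `D_{x_p} = Σ_{s=0}^p v_s ∂_{x_s}` on functions on `ℝ^{p+1}`. -/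
noncomputable def DopP (v : ℕ → A) (p : ℕ) (g : (Fin (p + 1) → ℝ) → A)
    (y : Fin (p + 1) → ℝ) : A :=
  ∑ s : Fin (p + 1), v (s : ℕ) * pdP p s g y

/-- The operator `D̄_{x_p} = ∂_{x_0} - Σ_{s=1}^p v_s ∂_{x_s}` on functions on `ℝ^{p+1}`. -/
noncomputable def DbaropP (v : ℕ → A) (p : ℕ) (g : (Fin (p + 1) → ℝ) → A)
    (y : Fin (p + 1) → ℝ) : A :=
  pdP p 0 g y - ∑ s : Fin (p + 1), if 1 ≤ (s : ℕ) then v (s : ℕ) * pdP p s g y else 0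

/-- The operator `D_{x_p}` on functions on `ℝ^{p+2} = ℝ^{p+1} × ℝ`. -/
noncomputable def DopSx (v : ℕ → A) (p : ℕ) (G : (Fin (p + 1) → ℝ) × ℝ → A)
    (z : (Fin (p + 1) → ℝ) × ℝ) : A :=
  ∑ s : Fin (p + 1), v (s : ℕ) * pdSx p s G z

/-- The operator `D̄_{x_p}` on functions on `ℝ^{p+2} = ℝ^{p+1} × ℝ`. -/
noncomputable def DbaropSx (v : ℕ → A) (p : ℕ) (G : (Fin (p + 1) → ℝ) × ℝ → A)
    (z : (Fin (p + 1) → ℝ) × ℝ) : A :=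
  pdSx p 0 G z - ∑ s : Fin (p + 1), if 1 ≤ (s : ℕ) then v (s : ℕ) * pdSx p s G z else 0

/-- The Laplacian `Δ_x` on functions on `ℝ^{m+1}`. -/
noncomputable def lapF (m : ℕ) (f : (Fin (m + 1) → ℝ) → A)
    (x : Fin (m + 1) → ℝ) : A :=
  ∑ s : Fin (m + 1), pdF m s (pdF m s f) x

/-- The Laplacian `Δ_{x_p}` on functions on `ℝ^{p+1}`. -/
noncomputable def lapP (p : ℕ) (g : (Fin (p + 1) → ℝ) → A)
    (y : Fin (p + 1) → ℝ) : A :=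
  ∑ s : Fin (p + 1), pdP p s (pdP p s g) y

/-- Iterated Laplacian `Δ_x^k`. -/
noncomputable def lapIterF (m k : ℕ) (f : (Fin (m + 1) → ℝ) → A) :
    (Fin (m + 1) → ℝ) → A :=
  (fun g => lapF m g)^[k] f

/-- Iterated Laplacian `Δ_{x_p}^k`. -/
noncomputable def lapIterP (p k : ℕ) (g : (Fin (p + 1) → ℝ) → A) :
    (Fin (p + 1) → ℝ) → A :=
  (fun h => lapP p h)^[k] g

/-- The Laplacian `Δ_{x'} = Δ_{x_p} + ∂_r²` on functions on `ℝ^{p+2}`. -/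
noncomputable def lapSx (p : ℕ) (G : (Fin (p + 1) → ℝ) × ℝ → A)
    (z : (Fin (p + 1) → ℝ) × ℝ) : A :=
  (∑ s : Fin (p + 1), pdSx p s (pdSx p s G) z) + pdSr2 p G z

/-- The slice Cauchy-Riemann operator `D_ω = D_{x_p} + ω ∂_r` applied to a function
on `ℝ^{p+2}`, where `ω` is given in coordinates by `w`. -/
noncomputable def DomCR (v : ℕ → A) (m p : ℕ) (w : Fin (m + 1) → ℝ)
    (G : (Fin (p + 1) → ℝ) × ℝ → A) (z : (Fin (p + 1) → ℝ) × ℝ) : A :=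
  DopSx v p G z + emb v m w * pdSr p G z

/-- `f` is left generalized partial-slice monogenic (of type `(p, m-p)`) on `Ω`. -/
def GSM (v : ℕ → A) (m p : ℕ) (f : (Fin (m + 1) → ℝ) → A)
    (Ω : Set (Fin (m + 1) → ℝ)) : Prop :=
  ∀ w ∈ Sph v m p, ContDiffOn ℝ 1 (sliceFun m p f w) (sliceSet m p Ω w) ∧
    ∀ z ∈ sliceSet m p Ω w, DomCR v m p w (sliceFun m p f w) z = 0

/-- `Ω` is partially symmetric with respect to `ℝ^{p+1}`. -/
def PSym (v : ℕ → A) (m p : ℕ) (Ω : Set (Fin (m + 1) → ℝ)) : Prop :=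
  ∀ x ∈ Ω, ∀ w ∈ Sph v m p, xppart m p x + rad m p x • w ∈ Ω

/-- `Ω` is a slice domain: a domain meeting `ℝ^{p+1}` all of whose slices are
domains in `ℝ^{p+2}`. -/
def SliceDomain (v : ℕ → A) (m p : ℕ) (Ω : Set (Fin (m + 1) → ℝ)) : Prop :=
  IsOpen Ω ∧ IsConnected Ω ∧ (∃ x ∈ Ω, xqpart m p x = 0) ∧
    ∀ w ∈ Sph v m p, IsConnected (sliceSet m p Ω w)

/-- The reflection `(x_p, r) ↦ (x_p, -r)` of `ℝ^{p+2}`. -/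
def reflD (p : ℕ) (z : (Fin (p + 1) → ℝ) × ℝ) : (Fin (p + 1) → ℝ) × ℝ := (z.1, -z.2)

/-- The p-symmetric completion `Ω_D ⊆ M` of `D ⊆ ℝ^{p+2}`. -/
def OmegaD (v : ℕ → A) (m p : ℕ) (D : Set ((Fin (p + 1) → ℝ) × ℝ)) :
    Set (Fin (m + 1) → ℝ) :=
  {x | ∃ w ∈ Sph v m p, ∃ z ∈ D, x = pt m p w z.1 z.2}

/-- `(F₁, F₂)` satisfies the even-odd (stem function) conditions on `D`. -/
def IsStem (p : ℕ) (D : Set ((Fin (p + 1) → ℝ) × ℝ))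
    (F₁ F₂ : (Fin (p + 1) → ℝ) × ℝ → A) : Prop :=
  ∀ z ∈ D, F₁ (reflD p z) = F₁ z ∧ F₂ (reflD p z) = -F₂ z

/-- `f` is the generalized partial-slice function induced by the stem `(F₁, F₂)`:
`f(x_p + rω) = F₁(x_p, r) + ω F₂(x_p, r)`. -/
def Induced (v : ℕ → A) (m p : ℕ) (D : Set ((Fin (p + 1) → ℝ) × ℝ))
    (F₁ F₂ : (Fin (p + 1) → ℝ) × ℝ → A) (f : (Fin (m + 1) → ℝ) → A) : Prop :=
  ∀ w ∈ Sph v m p, ∀ z ∈ D, f (pt m p w z.1 z.2) = F₁ z + emb v m w * F₂ z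

/-- The generalized Cauchy-Riemann system for the stem `(F₁, F₂)` on `D`. -/
def StemCR (v : ℕ → A) (p : ℕ) (D : Set ((Fin (p + 1) → ℝ) × ℝ))
    (F₁ F₂ : (Fin (p + 1) → ℝ) × ℝ → A) : Prop :=
  ∀ z ∈ D, DopSx v p F₁ z - pdSr p F₂ z = 0 ∧ DbaropSx v p F₂ z + pdSr p F₁ z = 0

/-- `f` is generalized partial-slice regular on `Ω_D`. -/
def MemGSR (v : ℕ → A) (m p : ℕ) (D : Set ((Fin (p + 1) → ℝ) × ℝ))
    (f : (Fin (m + 1) → ℝ) → A) : Prop :=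
  ∃ F₁ F₂ : (Fin (p + 1) → ℝ) × ℝ → A, IsStem p D F₁ F₂ ∧
    ContDiffOn ℝ 1 F₁ D ∧ ContDiffOn ℝ 1 F₂ D ∧
    Induced v m p D F₁ F₂ f ∧ StemCR v p D F₁ F₂

/-- `f` is a generalized partial-slice function on `Ω`. -/
def MemGS (v : ℕ → A) (m p : ℕ) (Ω : Set (Fin (m + 1) → ℝ))
    (f : (Fin (m + 1) → ℝ) → A) : Prop :=
  ∃ F₁ F₂ : (Fin (p + 1) → ℝ) × ℝ → A,
    (∀ z : (Fin (p + 1) → ℝ) × ℝ, F₁ (reflD p z) = F₁ z ∧ F₂ (reflD p z) = -F₂ z) ∧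
    ∀ x ∈ Ω, f x = F₁ (projP m p x, rad m p x) +
      emb v m (normq m p x) * F₂ (projP m p x, rad m p x)

/-- Non-associative power: `a^n` with products taken from the right. -/
def apow (a : A) (n : ℕ) : A := (fun b => a * b)^[n] 1

/-- Partial even part `PE[f](x) = (f(x) + f(x_⋄))/2`. -/
noncomputable def PE (m p : ℕ) (f : (Fin (m + 1) → ℝ) → A)
    (x : Fin (m + 1) → ℝ) : A := (2 : ℝ)⁻¹ • (f x + f (reflP m p x))

/-- Partial odd part `PO[f](x) = (f(x) - f(x_⋄))/2`. -/
noncomputable def PO (m p : ℕ) (f : (Fin (m + 1) → ℝ) → A)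
    (x : Fin (m + 1) → ℝ) : A := (2 : ℝ)⁻¹ • (f x - f (reflP m p x))

/-- `Ω₀* = {x_p + x_q : x_p ∈ Ω₀, x_q ∈ ℝ^q}`. -/
def Omega0star (m p : ℕ) (Ω₀ : Set (Fin (p + 1) → ℝ)) : Set (Fin (m + 1) → ℝ) :=
  {x | projP m p x ∈ Ω₀}

/-- The spherical derivative `f'_s(x) = (1/2) x_q⁻¹ (f(x) - f(x_⋄))`
(using `x_q⁻¹ = -x_q/|x_q|²`). -/
noncomputable def sder (v : ℕ → A) (m p : ℕ) (f : (Fin (m + 1) → ℝ) → A)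
    (x : Fin (m + 1) → ℝ) : A :=
  -(((2 : ℝ) * rad m p x ^ 2)⁻¹) • (emb v m (xqpart m p x) * (f x - f (reflP m p x)))

/-- The spherical Dirac operator
`Γ f = -(1/2) Σ_{p+1 ≤ i,j ≤ m} v_i (v_j (L_{ij} f))`. -/
noncomputable def sphericalGamma (v : ℕ → A) (m p : ℕ) (f : (Fin (m + 1) → ℝ) → A)
    (x : Fin (m + 1) → ℝ) : A :=
  -((2 : ℝ)⁻¹) • ∑ i : Fin (m + 1), ∑ j : Fin (m + 1),
    if p < (i : ℕ) ∧ p < (j : ℕ) then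
      v (i : ℕ) * (v (j : ℕ) * (x i • pdF m j f x - x j • pdF m i f x)) else 0

/-- The slice Cauchy-Riemann operator `D_ω` applied to (the slice restriction of) a
function `f` on `M`, at the point `x` (with `ω = x_q/|x_q|`). -/
noncomputable def DomCRat (v : ℕ → A) (m p : ℕ) (f : (Fin (m + 1) → ℝ) → A)
    (x : Fin (m + 1) → ℝ) : A :=
  DomCR v m p (normq m p x) (sliceFun m p f (normq m p x)) (projP m p x, rad m p x)

/-- `f` is left monogenic on `Ω`: `f ∈ C¹` and `D_x f = 0`. -/
def Monogenic (v : ℕ → A) (m : ℕ) (f : (Fin (m + 1) → ℝ) → A)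
    (Ω : Set (Fin (m + 1) → ℝ)) : Prop :=
  ContDiffOn ℝ 1 f Ω ∧ ∀ x ∈ Ω, Dop v m 0 m f x = 0

/-- `f` is harmonic on `Ω`: `f ∈ C²` and `Δ_x f = 0`. -/
def Harmonic (m : ℕ) (f : (Fin (m + 1) → ℝ) → A)
    (Ω : Set (Fin (m + 1) → ℝ)) : Prop :=
  ContDiffOn ℝ 2 f Ω ∧ ∀ x ∈ Ω, lapF m f x = 0

/-- A family of functions converges normally (locally a summable uniform bound). -/
def NormallyConvOn {E F : Type*} [TopologicalSpace E] [NormedAddCommGroup F]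
    (u : ℕ → E → F) (s : Set E) : Prop :=
  ∀ x ∈ s, ∃ U ∈ nhds x, ∃ c : ℕ → ℝ, Summable c ∧ ∀ k : ℕ, ∀ y ∈ U, ‖u k y‖ ≤ c k

/-- The generalized partial-slice CK-extension
`CK[f₀](x) = Σ_k (r^{2k}/(2k)!)(-Δ_{x_p})^k f₀(x_p)
  + ω Σ_k (r^{2k+1}/(2k+1)!)(-Δ_{x_p})^k (D_{x_p} f₀)(x_p)`. -/
noncomputable def CKe (v : ℕ → A) (m p : ℕ) (f₀ : (Fin (p + 1) → ℝ) → A)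
    (x : Fin (m + 1) → ℝ) : A :=
  (∑' k : ℕ, (((-1 : ℝ) ^ k * rad m p x ^ (2 * k)) / (2 * k).factorial) •
      lapIterP p k f₀ (projP m p x)) +
  emb v m (normq m p x) *
    ∑' k : ℕ, (((-1 : ℝ) ^ k * rad m p x ^ (2 * k + 1)) / (2 * k + 1).factorial) •
      lapIterP p k (DopP v p f₀) (projP m p x)

/-- The coefficient `Γ(q/2)(-1)^k r^{2k} / (2^{2k} k! Γ(k + q/2))`. -/
noncomputable def hgckC (q k : ℕ) (r : ℝ) : ℝ :=
  (Real.Gamma ((q : ℝ) / 2) * (-1) ^ k * r ^ (2 * k)) /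
    (2 ^ (2 * k) * (k.factorial : ℝ) * Real.Gamma ((k : ℝ) + (q : ℝ) / 2))

/-- The coefficient `Γ(q/2)(-1)^k r^{2k} / (2^{2k+1} k! Γ(k + q/2 + 1))`. -/
noncomputable def gckC' (q k : ℕ) (r : ℝ) : ℝ :=
  (Real.Gamma ((q : ℝ) / 2) * (-1) ^ k * r ^ (2 * k)) /
    (2 ^ (2 * k + 1) * (k.factorial : ℝ) * Real.Gamma ((k : ℝ) + (q : ℝ) / 2 + 1))

/-- The coefficient `Γ(q/2 + 1)(-1)^k r^{2k} / (2^{2k} k! Γ(k + q/2 + 1))`. -/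
noncomputable def hgckC' (q k : ℕ) (r : ℝ) : ℝ :=
  (Real.Gamma ((q : ℝ) / 2 + 1) * (-1) ^ k * r ^ (2 * k)) /
    (2 ^ (2 * k) * (k.factorial : ℝ) * Real.Gamma ((k : ℝ) + (q : ℝ) / 2 + 1))

/-- The monogenic generalized CK-extension `GCK[A₀]`. -/
noncomputable def GCKe (v : ℕ → A) (m p : ℕ) (A₀ : (Fin (p + 1) → ℝ) → A)
    (x : Fin (m + 1) → ℝ) : A :=
  (∑' k : ℕ, hgckC (m - p) k (rad m p x) • lapIterP p k A₀ (projP m p x)) +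
  emb v m (xqpart m p x) *
    ∑' k : ℕ, gckC' (m - p) k (rad m p x) • lapIterP p k (DopP v p A₀) (projP m p x)

/-- The harmonic generalized CK-extension `HGCK[A₀, A₁]`. -/
noncomputable def HGCKe (v : ℕ → A) (m p : ℕ) (A₀ A₁ : (Fin (p + 1) → ℝ) → A)
    (x : Fin (m + 1) → ℝ) : A :=
  (∑' k : ℕ, hgckC (m - p) k (rad m p x) • lapIterP p k A₀ (projP m p x)) +
  emb v m (xqpart m p x) *
    ∑' k : ℕ, hgckC' (m - p) k (rad m p x) • lapIterP p k A₁ (projP m p x)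

/-- The operator `(1/r)∂_r`, extended to `r = 0` by its limit `∂_r²` (on even
functions). -/
noncomputable def T1 (p : ℕ) (G : (Fin (p + 1) → ℝ) × ℝ → A) :
    (Fin (p + 1) → ℝ) × ℝ → A := fun z =>
  if z.2 = 0 then pdSr2 p G z else (z.2)⁻¹ • pdSr p G z

/-- The operator `∂_r ∘ (1/r)`, extended to `r = 0` by its limit `(1/2)∂_r²` (on odd
functions). -/
noncomputable def T2 (p : ℕ) (G : (Fin (p + 1) → ℝ) × ℝ → A) :
    (Fin (p + 1) → ℝ) × ℝ → A := fun z =>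
  if z.2 = 0 then (2 : ℝ)⁻¹ • pdSr2 p G z
  else fderiv ℝ (fun t : ℝ => t⁻¹ • G (z.1, t)) z.2 1

/-- `C_q(k) = (q-1)(q-3)⋯(q-2k+1)`, `C_q(0) = 1`. -/
noncomputable def cq (q k : ℕ) : ℝ :=
  ∏ i ∈ Finset.range k, ((q : ℝ) - (2 * (i : ℝ) + 1))

/-- Double factorial. -/
def dfac : ℕ → ℕ
  | 0 => 1
  | 1 => 1
  | n + 2 => (n + 2) * dfac n

/-- The Fueter-Sce constant `γ_q = (-1)^{(q-1)/2} (q-1)!!/(q-2)!!`. -/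
noncomputable def gammaQ (q : ℕ) : ℝ :=
  (-1 : ℝ) ^ ((q - 1) / 2) * (dfac (q - 1) : ℝ) / (dfac (q - 2) : ℝ)

/-!
On a slice the operator `D_ω` is a Dirac operator: its symbol, left multiplication by
`x = x_p + rω`, is inverted by left multiplication by the conjugate `2 x₀ - x` up to the factor
`‖x‖²`, because `x` is a root of its characteristic polynomial and left multiplication is
alternative. Null solutions of such an operator satisfy a Cauchy–Pompeiu representation formula,
hence are real analytic and obey unique continuation. If a null solution vanishes on a
hypersurface, its normal derivative vanishes there too since the symbol is injective; cutting it
off to zero on one side then gives another null solution of class `C¹`, and unique continuation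
forces both to vanish. A slice identity so obtained on `Ω_ω` restricts to the real points of `Ω`,
which form a hypersurface in every other slice.
-/

section Dirac

open MeasureTheory Module ContinuousLinearMap

variable {ι E V W : Type*} [Fintype ι] [NormedAddCommGroup E] [InnerProductSpace ℝ E]
  [NormedAddCommGroup V] [NormedSpace ℝ V] [NormedAddCommGroup W] [NormedSpace ℝ W]

/-- The constant-coefficient first-order operator `∑ᵢ σ(bᵢ) ∂ᵢ` with symbol `σ`, in the
orthonormal coordinates `b`. -/
noncomputable def diracOp (b : OrthonormalBasis ι ℝ E) (σ : E →L[ℝ] V →L[ℝ] W) (F : E → V)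
    (x : E) : W :=
  ∑ i, σ (b i) (fderiv ℝ F x (b i))

/-- The symbols `σ'` and `σ` factor the symbol `‖ξ‖²` of the (negative) Laplacian, as Clifford
multiplication by `ξ` and by its conjugate do. -/
def IsConjugateSymbol (σ' : E →L[ℝ] W →L[ℝ] V) (σ : E →L[ℝ] V →L[ℝ] W) : Prop :=
  ∀ ξ v, σ' ξ (σ ξ v) = ‖ξ‖ ^ 2 • v

/-- The kernel `σ'(y) / (ε² + ‖y‖²)^{n/2}` with `n = dim E`. For `ε = 0` it is, up to a constant,
the fundamental solution of the Dirac operator; for `ε ≠ 0` it is a smooth regularisation. -/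
noncomputable def cauchyKernel (σ' : E →L[ℝ] W →L[ℝ] V) (ε : ℝ) (y : E) : W →L[ℝ] V :=
  (ε ^ 2 + ‖y‖ ^ 2) ^ (-(finrank ℝ E : ℝ) / 2) • σ' y

theorem hasFDerivAt_add_norm_sq_rpow (a : ℝ) {ε : ℝ} (hε : ε ≠ 0) (y : E) :
    HasFDerivAt (fun y : E => (ε ^ 2 + ‖y‖ ^ 2) ^ a)
      ((2 * a * (ε ^ 2 + ‖y‖ ^ 2) ^ (a - 1)) • innerSL ℝ y) y := by
  have hsq : HasFDerivAt (fun y : E => ε ^ 2 + ‖y‖ ^ 2) (2 • innerSL ℝ y) y :=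
    (hasStrictFDerivAt_norm_sq y).hasFDerivAt.const_add _
  have hne : ε ^ 2 + ‖y‖ ^ 2 ≠ 0 := by positivity
  convert hsq.rpow_const (p := a) (Or.inl hne) using 1
  ext z
  simp only [smul_apply, smul_eq_mul, nsmul_eq_mul]
  ring

theorem hasFDerivAt_cauchyKernel (σ' : E →L[ℝ] W →L[ℝ] V) {ε : ℝ} (hε : ε ≠ 0) (y : E) :
    HasFDerivAt (cauchyKernel σ' ε)
      ((ε ^ 2 + ‖y‖ ^ 2) ^ (-(finrank ℝ E : ℝ) / 2) • σ' -
        ((finrank ℝ E * (ε ^ 2 + ‖y‖ ^ 2) ^ (-(finrank ℝ E : ℝ) / 2 - 1)) •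
          innerSL ℝ y).smulRight (σ' y)) y := by
  refine ((hasFDerivAt_add_norm_sq_rpow (-(finrank ℝ E : ℝ) / 2) hε y).smul
    σ'.hasFDerivAt).congr_fderiv ?_
  ext z w
  simp only [sub_apply, add_apply, smulRight_apply, smul_apply]
  module

theorem continuous_cauchyKernel (σ' : E →L[ℝ] W →L[ℝ] V) {ε : ℝ} (hε : ε ≠ 0) :
    Continuous (cauchyKernel σ' ε) :=
  continuous_iff_continuousAt.2 fun y => (hasFDerivAt_cauchyKernel σ' hε y).continuousAt

theorem continuous_fderiv_cauchyKernel_apply (σ' : E →L[ℝ] W →L[ℝ] V) {ε : ℝ} (hε : ε ≠ 0)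
    (ξ : E) : Continuous fun y => fderiv ℝ (cauchyKernel σ' ε) y ξ := by
  have hcont (a : ℝ) : Continuous fun y : E => (ε ^ 2 + ‖y‖ ^ 2) ^ a :=
    continuous_iff_continuousAt.2 fun y => (hasFDerivAt_add_norm_sq_rpow a hε y).continuousAt
  simp only [(hasFDerivAt_cauchyKernel σ' hε _).fderiv, sub_apply, smul_apply,
    smulRight_apply, innerSL_apply_apply]
  have := hcont (-(finrank ℝ E : ℝ) / 2)
  have := hcont (-(finrank ℝ E : ℝ) / 2 - 1)
  fun_prop

theorem sum_fderiv_cauchyKernel (b : OrthonormalBasis ι ℝ E) {σ' : E →L[ℝ] W →L[ℝ] V}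
    {σ : E →L[ℝ] V →L[ℝ] W} (hσ : IsConjugateSymbol σ' σ) {ε : ℝ} (hε : ε ≠ 0) (y : E) (v : V) :
    ∑ i, fderiv ℝ (cauchyKernel σ' ε) y (b i) (σ (b i) v) =
      (finrank ℝ E * ε ^ 2 * (ε ^ 2 + ‖y‖ ^ 2) ^ (-(finrank ℝ E : ℝ) / 2 - 1)) • v := by
  have hpos : 0 < ε ^ 2 + ‖y‖ ^ 2 := by positivity
  have hunit (i : ι) : σ' (b i) (σ (b i) v) = v := by
    rw [hσ, b.norm_eq_one, one_pow, one_smul]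
  have hradial : ∑ i, inner ℝ y (b i) • σ' y (σ (b i) v) = ‖y‖ ^ 2 • v := by
    have hy : ∑ i, inner ℝ y (b i) • b i = y := by
      simpa only [real_inner_comm] using b.sum_repr' y
    calc ∑ i, inner ℝ y (b i) • σ' y (σ (b i) v)
        = σ' y (σ (∑ i, inner ℝ y (b i) • b i) v) := by
          simp only [map_sum, map_smul, sum_apply, smul_apply]
      _ = ‖y‖ ^ 2 • v := by rw [hy, hσ]
  have hterm (i : ι) : fderiv ℝ (cauchyKernel σ' ε) y (b i) (σ (b i) v) =
      (ε ^ 2 + ‖y‖ ^ 2) ^ (-(finrank ℝ E : ℝ) / 2) • v -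
        (finrank ℝ E * (ε ^ 2 + ‖y‖ ^ 2) ^ (-(finrank ℝ E : ℝ) / 2 - 1)) •
          (inner ℝ y (b i) • σ' y (σ (b i) v)) := by
    rw [(hasFDerivAt_cauchyKernel σ' hε y).fderiv]
    simp only [sub_apply, smul_apply, smulRight_apply, innerSL_apply_apply, smul_eq_mul, hunit,
      mul_smul]
  simp only [hterm, Finset.sum_sub_distrib, ← Finset.smul_sum, hradial, Finset.sum_const,
    Finset.card_univ, ← Nat.cast_smul_eq_nsmul ℝ, ← finrank_eq_card_basis b.toBasis]
  rw [smul_smul, smul_smul, ← sub_smul, Real.rpow_sub_one hpos.ne']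
  congr 1
  field_simp
  ring

end Dirac

section CauchyPompeiu

open MeasureTheory Module ContinuousLinearMap

variable {ι E V W : Type*} [Fintype ι] [NormedAddCommGroup E] [InnerProductSpace ℝ E]
  [NormedAddCommGroup V] [NormedSpace ℝ V] [NormedAddCommGroup W] [NormedSpace ℝ W]

theorem continuous_diracOp (b : OrthonormalBasis ι ℝ E) (σ : E →L[ℝ] V →L[ℝ] W) {u : E → V}
    (hu : ContDiff ℝ 1 u) : Continuous (diracOp b σ u) := by
  have := hu.continuous_fderiv one_ne_zero
  unfold diracOp
  fun_prop

theorem hasCompactSupport_diracOp (b : OrthonormalBasis ι ℝ E) (σ : E →L[ℝ] V →L[ℝ] W)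
    {u : E → V} (hu : HasCompactSupport u) : HasCompactSupport (diracOp b σ u) :=
  (hu.fderiv ℝ).comp_left (g := fun T : E →L[ℝ] V => ∑ i, σ (b i) (T (b i))) (by simp)

theorem norm_cauchyKernel_le (σ' : E →L[ℝ] W →L[ℝ] V) (ε : ℝ) (y : E) :
    ‖cauchyKernel σ' ε y‖ ≤ ‖σ'‖ * ‖y‖ ^ (-(finrank ℝ E - 1 : ℝ)) := by
  rcases eq_or_ne y 0 with rfl | hy
  · simp only [cauchyKernel, map_zero, smul_zero, norm_zero]
    positivity
  have hy' : 0 < ‖y‖ := norm_pos_iff.2 hy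
  have hexp : -(finrank ℝ E : ℝ) / 2 ≤ 0 := by
    rw [neg_div]; exact neg_nonpos.2 (by positivity)
  calc ‖cauchyKernel σ' ε y‖ = (ε ^ 2 + ‖y‖ ^ 2) ^ (-(finrank ℝ E : ℝ) / 2) * ‖σ' y‖ := by
        rw [cauchyKernel, norm_smul, Real.norm_of_nonneg (by positivity)]
    _ ≤ (‖y‖ ^ 2) ^ (-(finrank ℝ E : ℝ) / 2) * (‖σ'‖ * ‖y‖) := by
        gcongr ?_ * ?_
        · exact Real.rpow_le_rpow_of_nonpos (by positivity) (by nlinarith [sq_nonneg ε]) hexp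
        · exact σ'.le_opNorm y
    _ = ‖σ'‖ * ‖y‖ ^ (-(finrank ℝ E - 1 : ℝ)) := by
        rw [← Real.rpow_natCast_mul hy'.le, neg_sub, sub_eq_neg_add, Real.rpow_add_one hy'.ne']
        push_cast
        rw [mul_div_cancel₀ _ two_ne_zero]
        ring

theorem norm_cauchyKernel_apply_le (σ' : E →L[ℝ] W →L[ℝ] V) (ε : ℝ) (y : E) (w : W) :
    ‖cauchyKernel σ' ε y w‖ ≤ ‖σ'‖ * ‖‖y‖ ^ (-(finrank ℝ E - 1 : ℝ)) • w‖ := by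
  rw [norm_smul, Real.norm_of_nonneg (by positivity), ← mul_assoc]
  exact (cauchyKernel σ' ε y).le_of_opNorm_le (norm_cauchyKernel_le σ' ε y) w

theorem tendsto_norm_pow_mul_one_add_norm_sq_rpow :
    Tendsto (fun y : E => ‖y‖ ^ finrank ℝ E * (1 + ‖y‖ ^ 2) ^ (-(finrank ℝ E : ℝ) / 2 - 1))
      (Bornology.cobounded E) (𝓝 0) := by
  have hlim : Tendsto (fun y : E => (1 + ‖y‖ ^ 2)⁻¹) (Bornology.cobounded E) (𝓝 0) :=
    tendsto_inv_atTop_zero.comp (tendsto_atTop_add_const_left _ _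
      ((tendsto_pow_atTop two_ne_zero).comp tendsto_norm_cobounded_atTop))
  refine squeeze_zero (fun y => by positivity) (fun y => ?_) hlim
  have hpos : 0 < 1 + ‖y‖ ^ 2 := by positivity
  have hle : ‖y‖ ^ finrank ℝ E ≤ (1 + ‖y‖ ^ 2) ^ ((finrank ℝ E : ℝ) / 2) := by
    calc ‖y‖ ^ finrank ℝ E = (‖y‖ ^ 2) ^ ((finrank ℝ E : ℝ) / 2) := by
          rw [← Real.rpow_natCast_mul (norm_nonneg y), ← Real.rpow_natCast]
          push_cast
          rw [mul_div_cancel₀ _ two_ne_zero]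
      _ ≤ _ := by gcongr; linarith
  rw [Real.rpow_sub_one hpos.ne', neg_div, Real.rpow_neg hpos.le, div_eq_mul_inv, ← mul_assoc]
  exact mul_le_of_le_one_left (by positivity)
    (mul_inv_le_one_of_le₀ hle (by positivity))

theorem inv_pow_mul_one_add_norm_sq_rpow (n : ℕ) {ε : ℝ} (hε : 0 < ε) (y : E) :
    ε⁻¹ ^ n * (1 + ‖ε⁻¹ • y‖ ^ 2) ^ (-(n : ℝ) / 2 - 1) =
      ε ^ 2 * (ε ^ 2 + ‖y‖ ^ 2) ^ (-(n : ℝ) / 2 - 1) := by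
  have hbase : 1 + ‖ε⁻¹ • y‖ ^ 2 = (ε ^ 2 + ‖y‖ ^ 2) / ε ^ 2 := by
    rw [norm_smul, norm_inv, Real.norm_of_nonneg hε.le]
    field_simp
  have hscale : (ε ^ 2) ^ (-(n : ℝ) / 2 - 1) = (ε ^ n * ε ^ 2)⁻¹ := by
    rw [← Real.rpow_natCast_mul hε.le, mul_inv, ← Real.rpow_natCast, ← Real.rpow_natCast,
      ← Real.rpow_neg hε.le, ← Real.rpow_neg hε.le, ← Real.rpow_add hε]
    push_cast
    ring_nf
  rw [hbase, Real.div_rpow (by positivity) (sq_nonneg ε), hscale]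
  field_simp
  simp [hε.ne']

variable [FiniteDimensional ℝ E] [MeasurableSpace E] [BorelSpace E]

theorem integral_cauchyKernel_diracOp (b : OrthonormalBasis ι ℝ E) {σ' : E →L[ℝ] W →L[ℝ] V}
    {σ : E →L[ℝ] V →L[ℝ] W} (hσ : IsConjugateSymbol σ' σ) {u : E → V} (hu : ContDiff ℝ 1 u)
    (hu' : HasCompactSupport u) {ε : ℝ} (hε : ε ≠ 0) :
    ∫ y, cauchyKernel σ' ε y (diracOp b σ u y) =
      -∫ y, (finrank ℝ E * ε ^ 2 * (ε ^ 2 + ‖y‖ ^ 2) ^ (-(finrank ℝ E : ℝ) / 2 - 1)) • u y := by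
  have hK := continuous_cauchyKernel σ' hε
  have hdK := continuous_fderiv_cauchyKernel_apply σ' hε
  have := hu.continuous_fderiv one_ne_zero
  have hcont := hu.continuous
  have hint {f : E → V} (hf : Continuous f) (h0 : ∀ y ∉ tsupport u, f y = 0) : Integrable f :=
    hf.integrable_of_hasCompactSupport (.intro hu' h0)
  have hi (i : ι) : Integrable fun y => cauchyKernel σ' ε y (σ (b i) (fderiv ℝ u y (b i))) :=
    hint (by fun_prop) fun y hy => by simp [fderiv_of_notMem_tsupport ℝ hy]
  have hi' (i : ι) : Integrable fun y => fderiv ℝ (cauchyKernel σ' ε) y (b i) (σ (b i) (u y)) :=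
    hint ((hdK (b i)).clm_apply (by fun_prop)) fun y hy => by
      simp [image_eq_zero_of_notMem_tsupport hy]
  have hi₀ (i : ι) : Integrable fun y => cauchyKernel σ' ε y (σ (b i) (u y)) :=
    hint (by fun_prop) fun y hy => by simp [image_eq_zero_of_notMem_tsupport hy]
  have hparts (i : ι) : ∫ y, cauchyKernel σ' ε y (σ (b i) (fderiv ℝ u y (b i))) =
      -∫ y, fderiv ℝ (cauchyKernel σ' ε) y (b i) (σ (b i) (u y)) :=
    integral_bilinear_fderiv_right_eq_neg_left_of_integrable (μ := volume)
      (B := (compL ℝ V W V).flip (σ (b i))) (hi' i) (hi i) (hi₀ i)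
      (fun y _ => (hasFDerivAt_cauchyKernel σ' hε y).differentiableAt)
      (fun y _ => hu.differentiable one_ne_zero y)
  simp only [diracOp, map_sum]
  rw [integral_finsetSum _ fun i _ => hi i]
  simp only [hparts, Finset.sum_neg_distrib]
  rw [← integral_finsetSum _ fun i _ => hi' i]
  simp only [sum_fderiv_cauchyKernel b hσ hε]

theorem aestronglyMeasurable_cauchyKernel_apply (σ' : E →L[ℝ] W →L[ℝ] V) (ε : ℝ) {g : E → W}
    (hg : Continuous g) : AEStronglyMeasurable (fun y => cauchyKernel σ' ε y (g y)) :=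
  (by fun_prop : Measurable fun y : E => (ε ^ 2 + ‖y‖ ^ 2) ^ (-(finrank ℝ E : ℝ) / 2)
    ).aestronglyMeasurable.smul (by fun_prop : Continuous fun y => σ' y (g y)).aestronglyMeasurable

theorem integrable_one_add_norm_sq_rpow :
    Integrable fun y : E => (1 + ‖y‖ ^ 2) ^ (-(finrank ℝ E : ℝ) / 2 - 1) := by
  convert integrable_rpow_neg_one_add_norm_sq (E := E) (μ := volume)
    (r := finrank ℝ E + 2) (by linarith) using 3
  ring

variable [Nontrivial E]

variable (E) in
/-- The constant `κ = n ∫ (1 + ‖y‖²)^{-n/2-1} dy` relating `cauchyKernel σ' 0` to the fundamental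
solution; it is the area of the unit sphere of `E`. -/
noncomputable def cauchyConst : ℝ :=
  finrank ℝ E * ∫ y : E, (1 + ‖y‖ ^ 2) ^ (-(finrank ℝ E : ℝ) / 2 - 1)

theorem integrable_norm_rpow_smul {g : E → W} (hg : Continuous g) (hg' : HasCompactSupport g) :
    Integrable fun y => ‖y‖ ^ (-(finrank ℝ E - 1 : ℝ)) • g y :=
  (locallyIntegrable_of_norm_le_rpow (C := 1) finrank_pos (sub_one_lt _)
    (.of_forall fun y => by rw [one_mul, Real.norm_of_nonneg (by positivity)])
    (Measurable.aestronglyMeasurable (by fun_prop))).integrable_smul_right_of_hasCompactSupport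
    hg hg'

theorem integrable_cauchyKernel_apply (σ' : E →L[ℝ] W →L[ℝ] V) (ε : ℝ) {g : E → W}
    (hg : Continuous g) (hg' : HasCompactSupport g) :
    Integrable fun y => cauchyKernel σ' ε y (g y) :=
  ((integrable_norm_rpow_smul hg hg').norm.const_mul ‖σ'‖).mono'
    (aestronglyMeasurable_cauchyKernel_apply σ' ε hg)
    (.of_forall fun y => norm_cauchyKernel_apply_le σ' ε y (g y))

theorem tendsto_integral_cauchyKernel (σ' : E →L[ℝ] W →L[ℝ] V) {g : E → W}
    (hg : Continuous g) (hg' : HasCompactSupport g) :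
    Tendsto (fun ε : ℝ => ∫ y, cauchyKernel σ' ε y (g y)) (𝓝[>] 0)
      (𝓝 (∫ y, cauchyKernel σ' 0 y (g y))) := by
  refine tendsto_integral_filter_of_dominated_convergence _
    (.of_forall fun ε => aestronglyMeasurable_cauchyKernel_apply σ' ε hg)
    (.of_forall fun ε => .of_forall fun y => norm_cauchyKernel_apply_le σ' ε y (g y))
    ((integrable_norm_rpow_smul hg hg').norm.const_mul ‖σ'‖) ?_
  filter_upwards [compl_mem_ae_iff.2 (measure_singleton (0 : E))] with y hy
  have hy0 : ((0 : ℝ) ^ 2 + ‖y‖ ^ 2) ≠ 0 := by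
    have : y ≠ 0 := hy
    positivity
  have hcont : ContinuousAt (fun ε : ℝ => cauchyKernel σ' ε y (g y)) 0 :=
    (ContinuousAt.rpow_const (f := fun ε : ℝ => ε ^ 2 + ‖y‖ ^ 2) (by fun_prop)
      (Or.inl hy0)).smul continuousAt_const
  exact hcont.tendsto.mono_left nhdsWithin_le_nhds

theorem cauchyConst_pos : 0 < cauchyConst E := by
  refine mul_pos (Nat.cast_pos.2 finrank_pos) (integral_pos_of_integrable_nonneg_nonzero (x := 0)
    ?_ integrable_one_add_norm_sq_rpow (fun y => by positivity) (by simp))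
  exact Continuous.rpow_const (by fun_prop) fun y => Or.inl (by positivity)

theorem tendsto_integral_bump_smul [CompleteSpace V] {u : E → V} (hu : Continuous u)
    (hu' : HasCompactSupport u) :
    Tendsto (fun ε : ℝ => ∫ y,
        (finrank ℝ E * ε ^ 2 * (ε ^ 2 + ‖y‖ ^ 2) ^ (-(finrank ℝ E : ℝ) / 2 - 1)) • u y)
      (𝓝[>] 0) (𝓝 (cauchyConst E • u 0)) := by
  set n := finrank ℝ E with hn
  set φ : E → ℝ := fun y => (cauchyConst E)⁻¹ * (n * (1 + ‖y‖ ^ 2) ^ (-(n : ℝ) / 2 - 1)) with hφ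
  have hκ : 0 < cauchyConst E := cauchyConst_pos
  have hφint : ∫ y, φ y = 1 := by
    simp only [hφ, integral_const_mul]
    exact inv_mul_cancel₀ hκ.ne'
  have hφdecay : Tendsto (fun y => ‖y‖ ^ n * φ y) (Bornology.cobounded E) (𝓝 0) := by
    convert (tendsto_norm_pow_mul_one_add_norm_sq_rpow (E := E)).const_mul
      ((cauchyConst E)⁻¹ * n) using 2
    · simp only [hφ, hn]; ring
    · simp
  have hpeak := (tendsto_integral_comp_smul_smul_of_integrable (fun y => by positivity) hφint
    hφdecay (hu.integrable_of_hasCompactSupport hu') hu.continuousAt).comp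
    (tendsto_inv_nhdsGT_zero (𝕜 := ℝ))
  refine (hpeak.const_smul (cauchyConst E)).congr' ?_
  filter_upwards [self_mem_nhdsWithin] with ε (hε : 0 < ε)
  rw [Function.comp_apply, ← integral_smul]
  congr 1 with y
  rw [smul_smul]
  congr 1
  linear_combination cauchyConst E * (cauchyConst E)⁻¹ * n * inv_pow_mul_one_add_norm_sq_rpow n hε y
    + n * (ε ^ 2 * (ε ^ 2 + ‖y‖ ^ 2) ^ (-(n : ℝ) / 2 - 1)) * mul_inv_cancel₀ hκ.ne'

/-- **Cauchy–Pompeiu formula** for compactly supported functions. -/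
theorem integral_cauchyKernel_zero_diracOp [CompleteSpace V] (b : OrthonormalBasis ι ℝ E)
    {σ' : E →L[ℝ] W →L[ℝ] V} {σ : E →L[ℝ] V →L[ℝ] W} (hσ : IsConjugateSymbol σ' σ) {u : E → V}
    (hu : ContDiff ℝ 1 u) (hu' : HasCompactSupport u) (x : E) :
    ∫ y, cauchyKernel σ' 0 (y - x) (diracOp b σ u y) = -(cauchyConst E • u x) := by
  set ux : E → V := fun y => u (y + x)
  have hux : ContDiff ℝ 1 ux := by fun_prop
  have hux' : HasCompactSupport ux := hu'.comp_homeomorph (Homeomorph.addRight x)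
  have hdirac (y : E) : diracOp b σ ux y = diracOp b σ u (y + x) := by
    simp only [diracOp, ux, fderiv_comp_add_right]
  have hlim := tendsto_integral_cauchyKernel σ' (continuous_diracOp b σ hux)
    (hasCompactSupport_diracOp b σ hux')
  have hlim' := (tendsto_integral_bump_smul hux.continuous hux').neg
  have hregular : ∀ᶠ ε : ℝ in 𝓝[>] 0, -∫ y, (finrank ℝ E * ε ^ 2 *
      (ε ^ 2 + ‖y‖ ^ 2) ^ (-(finrank ℝ E : ℝ) / 2 - 1)) • ux y =
      ∫ y, cauchyKernel σ' ε y (diracOp b σ ux y) := by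
    filter_upwards [self_mem_nhdsWithin] with ε hε
    exact (integral_cauchyKernel_diracOp b hσ hux hux' (ne_of_gt hε)).symm
  have heq := tendsto_nhds_unique hlim (hlim'.congr' hregular)
  rw [← integral_add_right_eq_self _ x]
  simpa only [add_sub_cancel_right, hdirac, ux, zero_add] using heq

end CauchyPompeiu

section AnalyticOnLines

open MeasureTheory Module

theorem hasDerivAt_setIntegral_of_continuousOn {𝕜 X G : Type*} [RCLike 𝕜] [TopologicalSpace X]
    [MeasurableSpace X] [OpensMeasurableSpace X] {μ : Measure X}
    [IsFiniteMeasureOnCompacts μ] [NormedAddCommGroup G] [NormedSpace ℝ G] [NormedSpace 𝕜 G]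
    {K : Set X} (hK : IsCompact K) (hKm : MeasurableSet K) {U : Set 𝕜} (hU : IsOpen U)
    {F F' : 𝕜 → X → G} (hF : ContinuousOn F.uncurry (U ×ˢ K))
    (hF' : ContinuousOn F'.uncurry (U ×ˢ K))
    (hderiv : ∀ z ∈ U, ∀ y ∈ K, HasDerivAt (F · y) (F' z y) z) {z : 𝕜} (hz : z ∈ U) :
    HasDerivAt (fun z => ∫ y in K, F z y ∂μ) (∫ y in K, F' z y ∂μ) z := by
  obtain ⟨r, hr, hrU⟩ := Metric.nhds_basis_closedBall.mem_iff.1 (hU.mem_nhds hz)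
  have hslice {T : 𝕜 → X → G} (hT : ContinuousOn T.uncurry (U ×ˢ K)) {a : 𝕜} (ha : a ∈ U) :
      ContinuousOn (T a) K :=
    hT.comp (by fun_prop : Continuous fun y => (a, y)).continuousOn fun y hy => ⟨ha, hy⟩
  obtain ⟨C, hC⟩ := ((isCompact_closedBall z r).prod hK).exists_bound_of_continuousOn
    (hF'.mono (Set.prod_mono_left hrU))
  have hmeas {T : 𝕜 → X → G} (hT : ContinuousOn T.uncurry (U ×ˢ K)) {a : 𝕜} (ha : a ∈ U) :
      AEStronglyMeasurable (T a) (μ.restrict K) :=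
    (hslice hT ha).aestronglyMeasurable_of_isCompact hK hKm
  have hint : Integrable (fun _ => C) (μ.restrict K) := integrableOn_const hK.measure_ne_top
  refine (hasDerivAt_integral_of_dominated_loc_of_deriv_le (Metric.closedBall_mem_nhds z hr)
    ?_ ?_ (hmeas hF' hz) ?_ hint ?_).2
  · filter_upwards [hU.mem_nhds hz] with a ha using hmeas hF ha
  · exact (hslice hF hz).integrableOn_compact' hK hKm
  · exact (ae_restrict_iff' hKm).2 (.of_forall fun y hy a ha => hC (a, y) ⟨ha, hy⟩)
  · exact (ae_restrict_iff' hKm).2 (.of_forall fun y hy a ha => hderiv a (hrU ha) y hy)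

variable {E : Type*} [NormedAddCommGroup E] [InnerProductSpace ℝ E]

/-- The holomorphic extension of the polynomial `t ↦ ‖y - t ξ‖²` to complex `t`. -/
noncomputable def complexNormSq (ξ y : E) (z : ℂ) : ℂ :=
  (‖y‖ ^ 2 : ℝ) - 2 * z * (inner ℝ y ξ : ℝ) + z ^ 2 * (‖ξ‖ ^ 2 : ℝ)

theorem complexNormSq_ofReal (ξ y : E) (t : ℝ) :
    complexNormSq ξ y t = (‖y - t • ξ‖ ^ 2 : ℝ) := by
  rw [norm_sub_sq_real, norm_smul, inner_smul_right, mul_pow, Real.norm_eq_abs, sq_abs,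
    complexNormSq]
  push_cast
  ring

theorem complexNormSq_mem_slitPlane {ξ y : E} {z : ℂ} {r : ℝ} (hr : 0 < r) (hy : r ≤ ‖y‖)
    (hz : ‖z‖ * ‖ξ‖ ≤ r / 4) : complexNormSq ξ y z ∈ Complex.slitPlane := by
  have hlin : ‖2 * z * (inner ℝ y ξ : ℝ)‖ ≤ 2 * ‖y‖ * (r / 4) := by
    calc ‖2 * z * (inner ℝ y ξ : ℝ)‖ = 2 * ‖z‖ * |inner ℝ y ξ| := by simp
      _ ≤ 2 * ‖z‖ * (‖y‖ * ‖ξ‖) := by gcongr; exact abs_real_inner_le_norm y ξ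
      _ = 2 * ‖y‖ * (‖z‖ * ‖ξ‖) := by ring
      _ ≤ 2 * ‖y‖ * (r / 4) := by gcongr
  have hquad : ‖z ^ 2 * (‖ξ‖ ^ 2 : ℝ)‖ ≤ (r / 4) ^ 2 := by
    calc ‖z ^ 2 * (‖ξ‖ ^ 2 : ℝ)‖ = (‖z‖ * ‖ξ‖) ^ 2 := by simp [mul_pow]
      _ ≤ (r / 4) ^ 2 := by gcongr
  have hlin' := abs_le.1 ((Complex.abs_re_le_norm _).trans hlin)
  have hquad' := abs_le.1 ((Complex.abs_re_le_norm _).trans hquad)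
  left
  simp only [complexNormSq, Complex.add_re, Complex.sub_re, Complex.ofReal_re]
  nlinarith

theorem hasDerivAt_complexNormSq_cpow {ξ y : E} {z : ℂ} (s : ℂ)
    (hz : complexNormSq ξ y z ∈ Complex.slitPlane) :
    HasDerivAt (fun z => complexNormSq ξ y z ^ s) (s * complexNormSq ξ y z ^ (s - 1) *
      (-2 * (inner ℝ y ξ : ℝ) + 2 * z * (‖ξ‖ ^ 2 : ℝ))) z := by
  have hpoly := ((((hasDerivAt_id z).const_mul 2).mul_const ((inner ℝ y ξ : ℝ) : ℂ)).const_sub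
    ((‖y‖ ^ 2 : ℝ) : ℂ)).add (((hasDerivAt_id z).pow 2).mul_const ((‖ξ‖ ^ 2 : ℝ) : ℂ))
  exact (hpoly.congr_deriv (by simp)).cpow_const hz

theorem continuous_complexNormSq_sub (ξ x : E) :
    Continuous fun q : ℂ × E => complexNormSq ξ (q.2 - x) q.1 := by
  unfold complexNormSq
  fun_prop

variable [FiniteDimensional ℝ E] [MeasurableSpace E] [BorelSpace E]

theorem differentiableOn_setIntegral_complexNormSq_cpow (s : ℂ) (ξ x : E) {α β : E → ℝ}
    (hα : Continuous α) (hβ : Continuous β) {K : Set E} (hK : IsCompact K) {U : Set ℂ}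
    (hU : IsOpen U)
    (hslit : ∀ q ∈ U ×ˢ K, complexNormSq ξ (q.2 - x) q.1 ∈ Complex.slitPlane) :
    DifferentiableOn ℂ
      (fun z => ∫ y in K, complexNormSq ξ (y - x) z ^ s * ((α y : ℂ) - z * (β y : ℂ))) U := by
  intro z hz
  have hcpow (a : ℂ) : ContinuousOn (fun q : ℂ × E => complexNormSq ξ (q.2 - x) q.1 ^ a)
      (U ×ˢ K) :=
    (continuous_complexNormSq_sub ξ x).continuousOn.cpow continuousOn_const hslit
  have hderiv := hasDerivAt_setIntegral_of_continuousOn (μ := volume) hK hK.measurableSet hU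
    (F := fun z y => complexNormSq ξ (y - x) z ^ s * ((α y : ℂ) - z * (β y : ℂ)))
    (F' := fun z y => s * complexNormSq ξ (y - x) z ^ (s - 1) *
        (-2 * (inner ℝ (y - x) ξ : ℝ) + 2 * z * (‖ξ‖ ^ 2 : ℝ)) * ((α y : ℂ) - z * (β y : ℂ)) +
      complexNormSq ξ (y - x) z ^ s * -(1 * (β y : ℂ)))
    ((hcpow s).mul (by fun_prop))
    ((((continuousOn_const.mul (hcpow (s - 1))).mul (by fun_prop)).mul (by fun_prop)).add
      ((hcpow s).mul (by fun_prop)))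
    (fun z hz y hy => (hasDerivAt_complexNormSq_cpow s (hslit (z, y) ⟨hz, hy⟩)).mul
      (((hasDerivAt_id z).mul_const (β y : ℂ)).const_sub (α y : ℂ))) hz
  exact hderiv.differentiableAt.differentiableWithinAt

/-- Off the compact set carrying `α` and `β` the kernel `‖y - (x + tξ)‖²ˢ` extends holomorphically
in `t`, which gives analyticity. -/
theorem analyticAt_integral_norm_sub_sq_rpow (s : ℝ) (ξ : E) {x : E} {α β : E → ℝ}
    (hα : Continuous α) (hβ : Continuous β) {K : Set E} (hK : IsCompact K) (hxK : x ∉ K)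
    (hαK : ∀ y ∉ K, α y = 0) (hβK : ∀ y ∉ K, β y = 0) :
    AnalyticAt ℝ
      (fun t : ℝ => ∫ y, (‖y - (x + t • ξ)‖ ^ 2) ^ s * (α y - t * β y)) 0 := by
  obtain ⟨r, hr, hrK⟩ := Metric.isOpen_iff.1 hK.isClosed.isOpen_compl x hxK
  obtain ⟨δ, hδ, hδr⟩ : ∃ δ > 0, δ * ‖ξ‖ ≤ r / 4 := by
    refine ⟨r / 4 / (‖ξ‖ + 1), by positivity, ?_⟩
    rw [div_mul_eq_mul_div, div_le_iff₀ (by positivity)]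
    nlinarith [norm_nonneg ξ]
  have hslit : ∀ q ∈ Metric.ball (0 : ℂ) δ ×ˢ K,
      complexNormSq ξ (q.2 - x) q.1 ∈ Complex.slitPlane := by
    rintro ⟨z, y⟩ ⟨hz, hy⟩
    have hry : r ≤ ‖y - x‖ := by
      simpa [dist_eq_norm] using fun h : y ∈ Metric.ball x r => hrK h hy
    refine complexNormSq_mem_slitPlane hr hry (le_trans ?_ hδr)
    gcongr
    exact (mem_ball_zero_iff.1 hz).le
  have hana : AnalyticAt ℂ
      (fun z => ∫ y in K, complexNormSq ξ (y - x) z ^ (s : ℂ) * ((α y : ℂ) - z * (β y : ℂ)))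
      ((0 : ℝ) : ℂ) := by
    simpa using (differentiableOn_setIntegral_complexNormSq_cpow s ξ x hα hβ hK Metric.isOpen_ball
      hslit).analyticAt (Metric.ball_mem_nhds _ hδ)
  have hre := (Complex.reCLM.analyticAt _).comp
    ((hana.restrictScalars (𝕜 := ℝ)).comp (f := fun t : ℝ => (t : ℂ))
      (Complex.ofRealCLM.analyticAt 0))
  refine hre.congr (.of_forall fun t => ?_)
  have hreal (y : E) : complexNormSq ξ (y - x) t ^ (s : ℂ) * ((α y : ℂ) - t * (β y : ℂ)) =
      ((‖y - (x + t • ξ)‖ ^ 2) ^ s * (α y - t * β y) : ℝ) := by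
    rw [complexNormSq_ofReal, ← Complex.ofReal_cpow (by positivity), sub_sub]
    push_cast
    rfl
  simp only [Function.comp_def, hreal, integral_complex_ofReal, Complex.reCLM_apply,
    Complex.ofReal_re]
  exact setIntegral_eq_integral_of_forall_compl_eq_zero fun y hy => by simp [hαK y hy, hβK y hy]

end AnalyticOnLines

section UniqueContinuation

open MeasureTheory Module

variable {ι E V W : Type*} [Fintype ι] [NormedAddCommGroup E] [InnerProductSpace ℝ E]
  [NormedAddCommGroup V] [NormedSpace ℝ V] [NormedAddCommGroup W] [NormedSpace ℝ W]

theorem diracOp_eventuallyEq (b : OrthonormalBasis ι ℝ E) (σ : E →L[ℝ] V →L[ℝ] W)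
    {F G : E → V} {x : E} (h : F =ᶠ[𝓝 x] G) : diracOp b σ F =ᶠ[𝓝 x] diracOp b σ G := by
  filter_upwards [h.fderiv (𝕜 := ℝ)] with y hy
  simp only [diracOp, hy]

variable [FiniteDimensional ℝ E]

theorem exists_contDiff_hasCompactSupport_eventuallyEq {n : ℕ∞} {F : E → V} {Ω : Set E}
    (hΩ : IsOpen Ω) (hF : ContDiffOn ℝ n F Ω) {x : E} (hx : x ∈ Ω) :
    ∃ u : E → V, ContDiff ℝ n u ∧ HasCompactSupport u ∧ u =ᶠ[𝓝 x] F := by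
  obtain ⟨R, hR, hRΩ⟩ := Metric.nhds_basis_closedBall.mem_iff.1 (hΩ.mem_nhds hx)
  let χ : ContDiffBump x := ⟨R / 2, R, by positivity, by linarith⟩
  have hχΩ : tsupport χ ⊆ Ω := χ.tsupport_eq.trans_subset hRΩ
  refine ⟨fun y => χ y • F y, contDiff_iff_contDiffAt.2 fun y => ?_,
    χ.hasCompactSupport.smul_right, ?_⟩
  · by_cases hy : y ∈ Ω
    · exact χ.contDiff.contDiffAt.smul (hF.contDiffAt (hΩ.mem_nhds hy))
    · refine (contDiffAt_const (c := (0 : V))).congr_of_eventuallyEq ?_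
      filter_upwards [notMem_tsupport_iff_eventuallyEq.1 fun h => hy (hχΩ h)] with z hz
      simp [hz]
  · filter_upwards [χ.eventuallyEq_one] with y hy
    simp [hy]

variable [Nontrivial E] [CompleteSpace V]

theorem analyticAt_line_of_hasCompactSupport (b : OrthonormalBasis ι ℝ E)
    {σ' : E →L[ℝ] W →L[ℝ] V} {σ : E →L[ℝ] V →L[ℝ] W} (hσ : IsConjugateSymbol σ' σ) {u : E → V}
    (hu : ContDiff ℝ 1 u) (hu' : HasCompactSupport u) {x : E} (hx : diracOp b σ u =ᶠ[𝓝 x] 0)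
    (ξ : E) (l : V →L[ℝ] ℝ) : AnalyticAt ℝ (fun t : ℝ => l (u (x + t • ξ))) 0 := by
  borelize E
  set g := diracOp b σ u
  have hg : Continuous g := continuous_diracOp b σ hu
  have hg' : HasCompactSupport g := hasCompactSupport_diracOp b σ hu'
  have hκ : cauchyConst E ≠ 0 := cauchyConst_pos.ne'
  have hg0 {y : E} (hy : y ∉ tsupport g) : g y = 0 := image_eq_zero_of_notMem_tsupport hy
  have hana := analyticAt_integral_norm_sub_sq_rpow (-(finrank ℝ E : ℝ) / 2) ξ
    (α := fun y => l (σ' (y - x) (g y))) (β := fun y => l (σ' ξ (g y))) (by fun_prop)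
    (by fun_prop) hg' (notMem_tsupport_iff_eventuallyEq.2 hx) (fun y hy => by simp [hg0 hy])
    (fun y hy => by simp [hg0 hy])
  refine (hana.const_smul (c := -(cauchyConst E)⁻¹)).congr (.of_forall fun t => ?_)
  have hint : Integrable fun y => cauchyKernel σ' 0 (y - (x + t • ξ)) (g y) := by
    have := (integrable_cauchyKernel_apply σ' 0 (g := fun y => g (y + (x + t • ξ)))
      (by fun_prop) (hg'.comp_homeomorph (Homeomorph.addRight _))).comp_sub_right (x + t • ξ)
    simpa only [sub_add_cancel] using this
  have hker (y : E) : l (cauchyKernel σ' 0 (y - (x + t • ξ)) (g y)) =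
      (‖y - (x + t • ξ)‖ ^ 2) ^ (-(finrank ℝ E : ℝ) / 2) *
        (l (σ' (y - x) (g y)) - t * l (σ' ξ (g y))) := by
    simp [cauchyKernel, ← sub_sub]
  have hrepr := congrArg l (integral_cauchyKernel_zero_diracOp b hσ hu hu' (x + t • ξ))
  rw [← l.integral_comp_comm hint, integral_congr_ae (.of_forall hker)] at hrepr
  simp only [Pi.smul_apply, hrepr, map_neg, map_smul, smul_eq_mul]
  field_simp

theorem analyticAt_line_of_diracOp_eq_zero (b : OrthonormalBasis ι ℝ E)
    {σ' : E →L[ℝ] W →L[ℝ] V} {σ : E →L[ℝ] V →L[ℝ] W} (hσ : IsConjugateSymbol σ' σ) {F : E → V}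
    {Ω : Set E} (hΩ : IsOpen Ω) (hF : ContDiffOn ℝ 1 F Ω) (hD : ∀ x ∈ Ω, diracOp b σ F x = 0)
    {x : E} (hx : x ∈ Ω) (ξ : E) (l : V →L[ℝ] ℝ) :
    AnalyticAt ℝ (fun t : ℝ => l (F (x + t • ξ))) 0 := by
  obtain ⟨u, hu, hu', huF⟩ := exists_contDiff_hasCompactSupport_eventuallyEq hΩ hF hx
  have hDu : diracOp b σ u =ᶠ[𝓝 x] 0 :=
    (diracOp_eventuallyEq b σ huF).trans (Filter.eventually_of_mem (hΩ.mem_nhds hx) hD)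
  refine (analyticAt_line_of_hasCompactSupport b hσ hu hu' hDu ξ l).congr ?_
  have hline : Tendsto (fun t : ℝ => x + t • ξ) (𝓝 0) (𝓝 x) :=
    Continuous.tendsto' (by fun_prop) _ _ (by simp)
  filter_upwards [hline.eventually huF] with t ht
  rw [ht]

theorem eqOn_zero_of_diracOp_eq_zero_of_convex (b : OrthonormalBasis ι ℝ E)
    {σ' : E →L[ℝ] W →L[ℝ] V} {σ : E →L[ℝ] V →L[ℝ] W} (hσ : IsConjugateSymbol σ' σ) {F : E → V}
    {Ω : Set E} (hΩ : IsOpen Ω) (hconv : Convex ℝ Ω) (hF : ContDiffOn ℝ 1 F Ω)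
    (hD : ∀ x ∈ Ω, diracOp b σ F x = 0) {x : E} (hx : x ∈ Ω) (hFx : F =ᶠ[𝓝 x] 0) :
    Set.EqOn F 0 Ω := by
  intro y hy
  refine SeparatingDual.eq_zero_of_forall_dual_eq_zero (R := ℝ) fun l => ?_
  set line : ℝ →ᵃ[ℝ] E := AffineMap.lineMap x y
  have hline (s t : ℝ) : line (s + t) = line s + t • (y - x) := by
    simp only [line, AffineMap.lineMap_apply_module']; module
  have hlinec : Continuous line := AffineMap.lineMap_continuous
  have hana : AnalyticOnNhd ℝ (fun t => l (F (line t))) (line ⁻¹' Ω) := by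
    intro s hs
    have h0 : AnalyticAt ℝ (fun t => l (F (line s + t • (y - x)))) (s - s) := by
      simpa using analyticAt_line_of_diracOp_eq_zero b hσ hΩ hF hD hs (y - x) l
    have hsub : AnalyticAt ℝ (fun t : ℝ => t - s) s := by fun_prop
    refine (h0.fun_comp (f := fun t : ℝ => t - s) hsub).congr (.of_forall fun t => ?_)
    simp only [← hline, add_sub_cancel]
  have hpre : IsPreconnected (line ⁻¹' Ω) := (hconv.affine_preimage line).isPreconnected
  have hzero : (fun t => l (F (line t))) =ᶠ[𝓝 0] 0 := by
    have : Tendsto line (𝓝 0) (𝓝 x) := hlinec.tendsto' _ _ (by simp [line])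
    filter_upwards [this.eventually hFx] with t ht
    simp [ht]
  simpa [line] using hana.eqOn_zero_of_preconnected_of_eventuallyEq_zero hpre
    (by simpa [line] using hx) hzero (show (1 : ℝ) ∈ line ⁻¹' Ω by simpa [line] using hy)

theorem eqOn_zero_of_diracOp_eq_zero (b : OrthonormalBasis ι ℝ E)
    {σ' : E →L[ℝ] W →L[ℝ] V} {σ : E →L[ℝ] V →L[ℝ] W} (hσ : IsConjugateSymbol σ' σ) {F : E → V}
    {Ω : Set E} (hΩ : IsOpen Ω) (hconn : IsPreconnected Ω) (hF : ContDiffOn ℝ 1 F Ω)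
    (hD : ∀ x ∈ Ω, diracOp b σ F x = 0) {x : E} (hx : x ∈ Ω) (hFx : F =ᶠ[𝓝 x] 0) :
    Set.EqOn F 0 Ω := by
  set Z : Set E := {y | F =ᶠ[𝓝 y] 0}
  have hZ : IsOpen Z := isOpen_setOfPred_eventually_nhds
  suffices h : Ω ⊆ Z from fun y hy => (h hy).self_of_nhds
  refine hconn.subset_of_closure_inter_subset hZ ⟨x, hx, hFx⟩ ?_
  rintro y ⟨hyZ, hyΩ⟩
  obtain ⟨r, hr, hrΩ⟩ := Metric.isOpen_iff.1 hΩ y hyΩ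
  obtain ⟨z, hzr, hz⟩ := mem_closure_iff_nhds.1 hyZ _ (Metric.ball_mem_nhds y hr)
  have hball := eqOn_zero_of_diracOp_eq_zero_of_convex b hσ Metric.isOpen_ball (convex_ball y r)
    (hF.mono hrΩ) (fun a ha => hD a (hrΩ ha)) hzr hz
  exact hball.eventuallyEq_of_mem (Metric.ball_mem_nhds y hr)

end UniqueContinuation

section Indicator

variable {E V : Type*} [NormedAddCommGroup E] [NormedSpace ℝ E] [NormedAddCommGroup V]
  [NormedSpace ℝ V] {S O : Set E} {F : E → V}

theorem indicator_eventuallyEq_of_notMem_frontier {X V : Type*} [TopologicalSpace X] [Zero V]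
    {S : Set X} {x : X} (hx : x ∉ frontier S) (F : X → V) :
    x ∈ S ∧ S.indicator F =ᶠ[𝓝 x] F ∨ x ∉ S ∧ S.indicator F =ᶠ[𝓝 x] 0 := by
  rw [← Set.mem_compl_iff, compl_frontier_eq_union_interior] at hx
  exact hx.imp
    (fun h => ⟨interior_subset h,
      Set.eqOn_indicator.eventuallyEq_of_mem (mem_interior_iff_mem_nhds.1 h)⟩)
    (fun h => ⟨interior_subset h,
      Set.eqOn_indicator'.eventuallyEq_of_mem (mem_interior_iff_mem_nhds.1 h)⟩)

theorem continuousAt_indicator_of_frontier {X V : Type*} [TopologicalSpace X]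
    [NormedAddCommGroup V] {S : Set X} {F : X → V} {x : X} (hF : ContinuousAt F x)
    (h : x ∈ frontier S → F x = 0) :
    ContinuousAt (S.indicator F) x := by
  by_cases hx : x ∈ frontier S
  · have hx0 : S.indicator F x = 0 := Set.indicator_apply_eq_zero.2 fun _ => h hx
    rw [ContinuousAt, hx0]
    exact squeeze_zero_norm (fun y => norm_indicator_le_norm_self F y)
      (tendsto_zero_iff_norm_tendsto_zero.1 (h hx ▸ hF.tendsto))
  · rcases indicator_eventuallyEq_of_notMem_frontier hx F with ⟨-, h⟩ | ⟨-, h⟩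
    · exact hF.congr h.symm
    · exact continuousAt_const.congr h.symm

theorem hasFDerivAt_indicator_of_frontier {x : E} (hF : DifferentiableAt ℝ F x)
    (h : x ∈ frontier S → F x = 0 ∧ fderiv ℝ F x = 0) :
    HasFDerivAt (S.indicator F) (S.indicator (fderiv ℝ F) x) x := by
  by_cases hx : x ∈ frontier S
  · obtain ⟨hx0, hdx⟩ := h hx
    have hzero : S.indicator F x = 0 ∧ S.indicator (fderiv ℝ F) x = 0 := by
      simp [Set.indicator_apply_eq_zero, hx0, hdx]
    have hlittle := hF.hasFDerivAt.isLittleO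
    simp only [hx0, hdx, sub_zero, zero_apply] at hlittle
    refine .of_isLittleO ((Asymptotics.isBigO_of_le _ fun y => ?_).trans_isLittleO hlittle)
    simpa [hzero] using norm_indicator_le_norm_self F y
  · rcases indicator_eventuallyEq_of_notMem_frontier hx F with ⟨hxS, h⟩ | ⟨hxS, h⟩
    · rw [Set.indicator_of_mem hxS]
      exact hF.hasFDerivAt.congr_of_eventuallyEq h
    · rw [Set.indicator_of_notMem hxS]
      exact (hasFDerivAt_const (0 : V) x).congr_of_eventuallyEq h

theorem contDiffOn_indicator_of_frontier (hO : IsOpen O) (hF : ContDiffOn ℝ 1 F O)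
    (h : ∀ x ∈ O ∩ frontier S, F x = 0 ∧ fderiv ℝ F x = 0) :
    ContDiffOn ℝ 1 (S.indicator F) O := by
  have hder (x : E) (hx : x ∈ O) :
      HasFDerivAt (S.indicator F) (S.indicator (fderiv ℝ F) x) x :=
    hasFDerivAt_indicator_of_frontier ((hF.differentiableOn one_ne_zero).differentiableAt
      (hO.mem_nhds hx)) fun hxS => h x ⟨hx, hxS⟩
  rw [← zero_add (1 : WithTop ℕ∞), contDiffOn_succ_iff_fderiv_of_isOpen hO, contDiffOn_zero]
  refine ⟨fun x hx => (hder x hx).differentiableAt.differentiableWithinAt, by simp, ?_⟩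
  refine ContinuousOn.congr (fun x hx => ?_) fun x hx => (hder x hx).fderiv
  exact (continuousAt_indicator_of_frontier ((hF.continuousOn_fderiv_of_isOpen hO
    le_rfl).continuousAt (hO.mem_nhds hx)) fun hxS => (h x ⟨hx, hxS⟩).2).continuousWithinAt

end Indicator

section Hypersurface

open Module

variable {ι E V W : Type*} [Fintype ι] [NormedAddCommGroup E] [InnerProductSpace ℝ E]
  [NormedAddCommGroup V] [NormedSpace ℝ V] [NormedAddCommGroup W] [NormedSpace ℝ W]

theorem eq_zero_of_sum_symbol_eq_zero (b : OrthonormalBasis ι ℝ E)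
    {σ' : E →L[ℝ] W →L[ℝ] V} {σ : E →L[ℝ] V →L[ℝ] W} (hσ : IsConjugateSymbol σ' σ)
    {T : E →L[ℝ] V} {ν : E} (hν : ν ≠ 0) (hT : ∀ x, inner ℝ ν x = 0 → T x = 0)
    (hsum : ∑ i, σ (b i) (T (b i)) = 0) : T = 0 := by
  have hT' (x : E) : ‖ν‖ ^ 2 • T x = inner ℝ ν x • T ν := by
    have := hT (‖ν‖ ^ 2 • x - inner ℝ ν x • ν) (by
      rw [inner_sub_right, inner_smul_right, inner_smul_right, real_inner_self_eq_norm_sq]; ring)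
    rwa [map_sub, map_smul, map_smul, sub_eq_zero] at this
  have hσν : σ ν (T ν) = 0 := by
    calc σ ν (T ν) = σ (∑ i, inner ℝ (b i) ν • b i) (T ν) := by rw [b.sum_repr']
      _ = ∑ i, σ (b i) (inner ℝ ν (b i) • T ν) := by
        simp only [map_sum, map_smul, sum_apply, smul_apply, real_inner_comm]
      _ = ‖ν‖ ^ 2 • ∑ i, σ (b i) (T (b i)) := by
        simp only [← hT', map_smul, Finset.smul_sum]
      _ = 0 := by rw [hsum, smul_zero]
  have hν2 : ‖ν‖ ^ 2 ≠ 0 := by positivity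
  have hTν : T ν = 0 := (smul_eq_zero.1 (by rw [← hσ, hσν, map_zero])).resolve_left hν2
  ext x
  simpa [hTν, hν2] using hT' x

variable [FiniteDimensional ℝ E] {G : Type*} [NormedAddCommGroup G] [NormedSpace ℝ G]

theorem exists_normal_of_injective {L : G →L[ℝ] E} (hL : Function.Injective L)
    (hd : finrank ℝ G + 1 = finrank ℝ E) :
    ∃ ν : E, ν ≠ 0 ∧ ∀ x, inner ℝ ν x = 0 ↔ x ∈ L.range := by
  have hrank : finrank ℝ L.range = finrank ℝ G := LinearMap.finrank_range_of_inj hL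
  have horth : finrank ℝ L.rangeᗮ = 1 := by
    have := L.range.finrank_add_finrank_orthogonal
    omega
  obtain ⟨ν, hν, hν0⟩ := Submodule.exists_mem_ne_zero_of_ne_bot
    (Submodule.one_le_finrank_iff.1 horth.ge)
  have hspan : ℝ ∙ ν = L.rangeᗮ := Submodule.eq_of_le_of_finrank_eq
    ((Submodule.span_singleton_le_iff_mem ν _).2 hν) (by rw [finrank_span_singleton hν0, horth])
  exact ⟨ν, hν0, fun x => by
    rw [← Submodule.mem_orthogonal_singleton_iff_inner_right, hspan,
      Submodule.orthogonal_orthogonal]⟩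

theorem fderiv_eq_zero_of_comp_eventuallyEq_zero (b : OrthonormalBasis ι ℝ E)
    {σ' : E →L[ℝ] W →L[ℝ] V} {σ : E →L[ℝ] V →L[ℝ] W} (hσ : IsConjugateSymbol σ' σ) {F : E → V}
    {φ : G → E} {u : G} (hd : finrank ℝ G + 1 = finrank ℝ E) (hφ : DifferentiableAt ℝ φ u)
    (hinj : Function.Injective (fderiv ℝ φ u)) (hF : DifferentiableAt ℝ F (φ u))
    (hFφ : F ∘ φ =ᶠ[𝓝 u] 0) (hD : diracOp b σ F (φ u) = 0) : fderiv ℝ F (φ u) = 0 := by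
  obtain ⟨ν, hν, hrange⟩ := exists_normal_of_injective hinj hd
  refine eq_zero_of_sum_symbol_eq_zero b hσ hν (fun x hx => ?_) hD
  obtain ⟨z, rfl⟩ := (hrange x).1 hx
  have htangent : (fderiv ℝ F (φ u)).comp (fderiv ℝ φ u) = 0 := by
    rw [← fderiv_comp u hF hφ, hFφ.fderiv_eq, fderiv_zero, Pi.zero_apply]
  exact DFunLike.congr_fun htangent z

theorem exists_openPartialHomeomorph_straightening {φ : G → E} {u₀ : G}
    (hd : finrank ℝ G + 1 = finrank ℝ E) (hφ : ContDiffAt ℝ 1 φ u₀)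
    (hinj : Function.Injective (fderiv ℝ φ u₀)) :
    ∃ P : OpenPartialHomeomorph (G × ℝ) E, (u₀, 0) ∈ P.source ∧ ∀ u, P (u, 0) = φ u := by
  have : FiniteDimensional ℝ G := .of_injective (fderiv ℝ φ u₀).toLinearMap hinj
  have : CompleteSpace G := FiniteDimensional.complete ℝ G
  obtain ⟨ν, hν, hrange⟩ := exists_normal_of_injective hinj hd
  let L : G × ℝ →L[ℝ] E := (fderiv ℝ φ u₀).coprod (.toSpanSingleton ℝ ν)
  have hL : Function.Injective L := by
    refine (injective_iff_map_eq_zero _).2 fun ⟨a, t⟩ hat => ?_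
    replace hat : fderiv ℝ φ u₀ a + t • ν = 0 := by simpa [L] using hat
    have ht : t = 0 := by
      have := (hrange (fderiv ℝ φ u₀ a)).2 ⟨a, rfl⟩
      simpa [inner_add_right, inner_smul_right, this, hν] using congrArg (inner ℝ ν) hat
    subst ht
    rw [zero_smul, add_zero] at hat
    rw [(injective_iff_map_eq_zero _).1 hinj a hat, Prod.mk_zero_zero]
  have hrank : finrank ℝ (G × ℝ) = finrank ℝ E := by rw [finrank_prod, finrank_self, hd]
  let T : (G × ℝ) ≃L[ℝ] E := (LinearEquiv.ofInjectiveOfFinrankEq L hL hrank).toContinuousLinearEquiv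
  have hΦ : HasStrictFDerivAt (fun z : G × ℝ => φ z.1 + z.2 • ν) (T : G × ℝ →L[ℝ] E) (u₀, 0) := by
    refine HasStrictFDerivAt.congr_fderiv
      (((hφ.hasStrictFDerivAt one_ne_zero).comp (u₀, (0 : ℝ)) hasStrictFDerivAt_fst).add
        (hasStrictFDerivAt_snd.smul_const ν)) ?_
    rw [show (T : G × ℝ →L[ℝ] E) = L from ContinuousLinearMap.ext fun _ => rfl]
    ext <;> simp [L]
  exact ⟨hΦ.toOpenPartialHomeomorph _, hΦ.mem_toOpenPartialHomeomorph_source, fun u => by simp⟩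

theorem exists_mem_mul_symm_snd_pos {X Y : Type*} [TopologicalSpace X] [TopologicalSpace Y]
    (P : OpenPartialHomeomorph (Y × ℝ) X) {u₀ : Y} (hP : (u₀, 0) ∈ P.source) {N : Set X}
    (hN : N ∈ 𝓝 (P (u₀, 0))) {s : ℝ} (hs : s ≠ 0) : ∃ x ∈ N, 0 < s * (P.symm x).2 := by
  have hpath : Tendsto (fun t : ℝ => (u₀, t * s)) (𝓝[>] 0) (𝓝 (u₀, 0)) :=
    (Continuous.tendsto' (by fun_prop) _ _ (by simp)).mono_left nhdsWithin_le_nhds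
  obtain ⟨t, ⟨hleft, htN⟩, ht⟩ := ((hpath.eventually ((P.eventually_left_inverse hP).and
    ((P.continuousAt hP).eventually hN))).and self_mem_nhdsWithin).exists
  refine ⟨P (u₀, t * s), htN, ?_⟩
  rw [hleft, mul_left_comm]
  exact mul_pos ht (mul_self_pos.2 hs)

/-- An immersed hypersurface is locally two-sided. -/
theorem exists_localDefiningFunction {φ : G → E} {u₀ : G} (hd : finrank ℝ G + 1 = finrank ℝ E)
    (hφ : ContDiffAt ℝ 1 φ u₀) (hinj : Function.Injective (fderiv ℝ φ u₀)) {U : Set G}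
    (hU : U ∈ 𝓝 u₀) {N : Set E} (hN : N ∈ 𝓝 (φ u₀)) :
    ∃ R > 0, Metric.ball (φ u₀) R ⊆ N ∧ ∃ τ : E → ℝ, ContinuousOn τ (Metric.ball (φ u₀) R) ∧
      (∀ x ∈ Metric.ball (φ u₀) R, τ x = 0 → x ∈ φ '' U) ∧
      (∃ x ∈ Metric.ball (φ u₀) R, τ x < 0) ∧ ∃ x ∈ Metric.ball (φ u₀) R, 0 < τ x := by
  obtain ⟨P, hP, hPφ⟩ := exists_openPartialHomeomorph_straightening hd hφ hinj
  have hsymm : P.symm (φ u₀) = (u₀, 0) := by rw [← hPφ, P.left_inv hP]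
  have htarget : φ u₀ ∈ P.target := hPφ u₀ ▸ P.map_source hP
  have hnear : ∀ᶠ x in 𝓝 (φ u₀), x ∈ N ∧ x ∈ P.target ∧ (P.symm x).1 ∈ U := by
    refine .and hN (.and (P.open_target.mem_nhds htarget) ?_)
    exact (P.symm.continuousAt htarget).fst.eventually
      (by simpa only [hsymm, eventually_mem_set] using hU)
  obtain ⟨R, hR, hball⟩ := Metric.eventually_nhds_iff_ball.1 hnear
  have hside {s : ℝ} (hs : s ≠ 0) : ∃ x ∈ Metric.ball (φ u₀) R, 0 < s * (P.symm x).2 :=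
    exists_mem_mul_symm_snd_pos P hP (hPφ u₀ ▸ Metric.ball_mem_nhds _ hR) hs
  refine ⟨R, hR, fun x hx => (hball x hx).1, fun x => (P.symm x).2,
    continuous_snd.comp_continuousOn (P.symm.continuousOn.mono fun x hx => (hball x hx).2.1),
    fun x hx hx0 => ?_, by simpa using hside (neg_ne_zero.2 one_ne_zero),
    by simpa using hside one_ne_zero⟩
  obtain ⟨-, hxt, hxU⟩ := hball x hx
  exact ⟨(P.symm x).1, hxU, by rw [← hPφ, ← hx0, P.right_inv hxt]⟩

variable [Nontrivial E] [CompleteSpace V]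

-- `F` cut off to one side of the level set still solves the equation, and vanishes on the other.
theorem eqOn_zero_of_vanishing_on_levelSet (b : OrthonormalBasis ι ℝ E)
    {σ' : E →L[ℝ] W →L[ℝ] V} {σ : E →L[ℝ] V →L[ℝ] W} (hσ : IsConjugateSymbol σ' σ) {F : E → V}
    {O : Set E} (hO : IsOpen O) (hconn : IsPreconnected O) (hF : ContDiffOn ℝ 1 F O)
    (hD : ∀ x ∈ O, diracOp b σ F x = 0) {τ : E → ℝ} (hτ : ContinuousOn τ O)
    (hlevel : ∀ x ∈ O, τ x = 0 → F x = 0 ∧ fderiv ℝ F x = 0)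
    (hneg : ∃ x ∈ O, τ x < 0) (hpos : ∃ x ∈ O, 0 < τ x) : Set.EqOn F 0 O := by
  set S : Set E := {x | 0 < τ x}
  have hτat {x : E} (hx : x ∈ O) : ContinuousAt τ x := hτ.continuousAt (hO.mem_nhds hx)
  have hnear_pos {x : E} (hx : x ∈ O) (h : 0 < τ x) : S ∈ 𝓝 x := (hτat hx).eventually_const_lt h
  have hnear_neg {x : E} (hx : x ∈ O) (h : τ x < 0) : Sᶜ ∈ 𝓝 x :=
    mem_of_superset ((hτat hx).eventually_lt_const h) fun y (hy : τ y < 0) => not_lt.2 hy.le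
  have hfrontier : ∀ x ∈ O ∩ frontier S, F x = 0 ∧ fderiv ℝ F x = 0 := by
    rintro x ⟨hx, hxS⟩
    refine hlevel x hx (by_contra fun h => ?_)
    rcases lt_or_gt_of_ne h with h | h
    · exact (frontier_compl S ▸ hxS).2 (mem_interior_iff_mem_nhds.2 (hnear_neg hx h))
    · exact hxS.2 (mem_interior_iff_mem_nhds.2 (hnear_pos hx h))
  have hDS : ∀ x ∈ O, diracOp b σ (S.indicator F) x = 0 := by
    intro x hx
    have hder := hasFDerivAt_indicator_of_frontier
      ((hF.differentiableOn one_ne_zero).differentiableAt (hO.mem_nhds hx))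
      fun hxS => hfrontier x ⟨hx, hxS⟩
    by_cases hxS : x ∈ S
    · simpa only [diracOp, hder.fderiv, Set.indicator_of_mem hxS] using hD x hx
    · simp [diracOp, hder.fderiv, Set.indicator_of_notMem hxS]
  obtain ⟨x, hx, hτx⟩ := hneg
  obtain ⟨y, hy, hτy⟩ := hpos
  have hcut : Set.EqOn (S.indicator F) 0 O :=
    eqOn_zero_of_diracOp_eq_zero b hσ hO hconn (contDiffOn_indicator_of_frontier hO hF hfrontier)
      hDS hx (Set.eqOn_indicator'.eventuallyEq_of_mem (hnear_neg hx hτx))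
  refine eqOn_zero_of_diracOp_eq_zero b hσ hO hconn hF hD hy ?_
  filter_upwards [hO.mem_nhds hy, hnear_pos hy hτy] with z hzO hzS
  rw [← Set.indicator_of_mem hzS F, hcut hzO]

theorem eqOn_zero_of_vanishing_on_hypersurface (b : OrthonormalBasis ι ℝ E)
    {σ' : E →L[ℝ] W →L[ℝ] V} {σ : E →L[ℝ] V →L[ℝ] W} (hσ : IsConjugateSymbol σ' σ) {F : E → V}
    {Ω : Set E} (hΩ : IsOpen Ω) (hconn : IsPreconnected Ω) (hF : ContDiffOn ℝ 1 F Ω)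
    (hD : ∀ x ∈ Ω, diracOp b σ F x = 0) (hd : finrank ℝ G + 1 = finrank ℝ E) {U : Set G}
    (hU : IsOpen U) (hUne : U.Nonempty) {φ : G → E} (hφ : ContDiffOn ℝ 1 φ U)
    (himm : ∀ u ∈ U, Function.Injective (fderiv ℝ φ u)) (hφΩ : Set.MapsTo φ U Ω)
    (hFφ : Set.EqOn (F ∘ φ) 0 U) : Set.EqOn F 0 Ω := by
  obtain ⟨u₀, hu₀⟩ := hUne
  have hφat {u : G} (hu : u ∈ U) : ContDiffAt ℝ 1 φ u := hφ.contDiffAt (hU.mem_nhds hu)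
  have hgrad {u : G} (hu : u ∈ U) : fderiv ℝ F (φ u) = 0 :=
    fderiv_eq_zero_of_comp_eventuallyEq_zero b hσ hd ((hφat hu).differentiableAt one_ne_zero)
      (himm u hu)
      ((hF.differentiableOn one_ne_zero).differentiableAt (hΩ.mem_nhds (hφΩ hu)))
      (hFφ.eventuallyEq_of_mem (hU.mem_nhds hu)) (hD _ (hφΩ hu))
  obtain ⟨R, hR, hRΩ, τ, hτ, hlevel, hneg, hpos⟩ := exists_localDefiningFunction hd (hφat hu₀)
    (himm u₀ hu₀) (hU.mem_nhds hu₀) (hΩ.mem_nhds (hφΩ hu₀))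
  have hzero : Set.EqOn F 0 (Metric.ball (φ u₀) R) := by
    refine eqOn_zero_of_vanishing_on_levelSet b hσ Metric.isOpen_ball
      (convex_ball _ _).isPreconnected (hF.mono hRΩ) (fun x hx => hD x (hRΩ hx)) hτ
      (fun x hx hx0 => ?_) hneg hpos
    obtain ⟨u, hu, rfl⟩ := hlevel x hx hx0
    exact ⟨hFφ hu, hgrad hu⟩
  exact eqOn_zero_of_diracOp_eq_zero b hσ hΩ hconn hF hD (hφΩ hu₀)
    (hzero.eventuallyEq_of_mem (Metric.ball_mem_nhds _ hR))

end Hypersurface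

section Coordinates

variable {V : Type*} [NormedAddCommGroup V] [NormedSpace ℝ V]

/-- The identification `emb` of `ℝ^{m+1}` with `M` as a continuous linear map. -/
noncomputable def embL (v : ℕ → V) (m : ℕ) : (Fin (m + 1) → ℝ) →L[ℝ] V :=
  ∑ s : Fin (m + 1), (ContinuousLinearMap.proj s : (Fin (m + 1) → ℝ) →L[ℝ] ℝ).smulRight (v s)

theorem embL_apply (v : ℕ → V) (m : ℕ) (x : Fin (m + 1) → ℝ) : embL v m x = emb v m x := by
  simp [embL, emb]

theorem emb_single (v : ℕ → V) {m : ℕ} (s : Fin (m + 1)) : emb v m (Pi.single s 1) = v s := by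
  simp [emb, Pi.single_apply]

/-- The map `(x_p, r) ↦ x_p + rω` parametrising a slice, as a continuous linear map. -/
noncomputable def ptL (m p : ℕ) (w : Fin (m + 1) → ℝ) :
    (Fin (p + 1) → ℝ) × ℝ →L[ℝ] (Fin (m + 1) → ℝ) :=
  LinearMap.toContinuousLinearMap
    { toFun := fun z => pt m p w z.1 z.2
      map_add' := fun z z' => by
        ext s
        by_cases hs : (s : ℕ) < p + 1 <;> simp [pt, injP, hs] <;> ring
      map_smul' := fun c z => by
        ext s
        by_cases hs : (s : ℕ) < p + 1 <;> simp [pt, injP, hs] <;> ring }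

theorem ptL_apply (m p : ℕ) (w : Fin (m + 1) → ℝ) (z : (Fin (p + 1) → ℝ) × ℝ) :
    ptL m p w z = pt m p w z.1 z.2 :=
  rfl

theorem pt_zero_right (m p : ℕ) (w : Fin (m + 1) → ℝ) (y : Fin (p + 1) → ℝ) :
    pt m p w y 0 = injP m p y := by
  rw [pt, zero_smul, add_zero]

theorem ptL_single {m p : ℕ} (hp : p ≤ m) (w : Fin (m + 1) → ℝ) (s : Fin (p + 1)) :
    ptL m p w (Pi.single s 1, 0) = Pi.single (Fin.castLE (Nat.succ_le_succ hp) s) 1 := by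
  rw [ptL_apply, pt_zero_right]
  ext t
  by_cases ht : (t : ℕ) < p + 1
  · simp [injP, ht, Pi.single_apply, Fin.ext_iff]
  · have hts : (t : ℕ) ≠ s := by omega
    simp [injP, ht, Fin.ext_iff, hts]

theorem ptL_zero_one (m p : ℕ) (w : Fin (m + 1) → ℝ) : ptL m p w (0, 1) = w := by
  ext s
  simp [ptL_apply, pt, injP]

theorem sum_sq_pt {m p : ℕ} (hp : p ≤ m) {w : Fin (m + 1) → ℝ}
    (hw : ∀ s : Fin (m + 1), (s : ℕ) ≤ p → w s = 0) (y : Fin (p + 1) → ℝ) (r : ℝ) :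
    ∑ s, pt m p w y r s ^ 2 = ∑ s, y s ^ 2 + r ^ 2 * ∑ s, w s ^ 2 := by
  have hinj : ∑ s, y s ^ 2 = ∑ s, injP m p y s ^ 2 := by
    refine Fintype.sum_of_injective _ (Fin.castLE_injective (Nat.succ_le_succ hp)) _ _
      (fun s hs => ?_) fun s => ?_
    · have : ¬(s : ℕ) < p + 1 := fun h => hs ⟨⟨s, h⟩, rfl⟩
      simp [injP, this]
    · simp [injP, s.is_lt]
  rw [hinj, Finset.mul_sum, ← Finset.sum_add_distrib]
  refine Finset.sum_congr rfl fun s _ => ?_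
  by_cases hs : (s : ℕ) ≤ p
  · simp [pt, hw s hs]
  · simp [pt, injP, hs, mul_pow]

theorem injP_projP_add_xqpart (m p : ℕ) (x : Fin (m + 1) → ℝ) :
    injP m p (projP m p x) + xqpart m p x = x := by
  ext s
  by_cases hs : (s : ℕ) ≤ p <;> simp [injP, projP, xqpart, hs, s.is_lt]

theorem rad_sq (m p : ℕ) (x : Fin (m + 1) → ℝ) : rad m p x ^ 2 = ∑ s, xqpart m p x s ^ 2 :=
  Real.sq_sqrt (Finset.sum_nonneg fun _ _ => sq_nonneg _)

theorem rad_smul_normq (m p : ℕ) (x : Fin (m + 1) → ℝ) :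
    rad m p x • normq m p x = xqpart m p x := by
  rcases eq_or_ne (rad m p x) 0 with hr | hr
  · have hsum : ∑ s, xqpart m p x s ^ 2 = 0 := by rw [← rad_sq, hr, sq, zero_mul]
    ext s
    simpa [hr, eq_comm] using
      (Finset.sum_eq_zero_iff_of_nonneg fun s _ => sq_nonneg (xqpart m p x s)).1 hsum s
        (Finset.mem_univ s)
  · rw [normq, smul_inv_smul₀ hr]

theorem pt_projP_rad (m p : ℕ) (x : Fin (m + 1) → ℝ) :
    pt m p (normq m p x) (projP m p x) (rad m p x) = x := by
  rw [pt, rad_smul_normq, injP_projP_add_xqpart]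

theorem sum_sq_normq {m p : ℕ} {x : Fin (m + 1) → ℝ} (hr : rad m p x ≠ 0) :
    ∑ s, normq m p x s ^ 2 = 1 := by
  simp only [normq, Pi.smul_apply, smul_eq_mul, mul_pow]
  rw [← Finset.mul_sum, ← rad_sq, inv_pow, inv_mul_cancel₀ (pow_ne_zero 2 hr)]

end Coordinates

section Algebra

variable {conj : A → A} {v : ℕ → A} {m p : ℕ}

/-- The multiplication of `A` as a continuous bilinear map. -/
noncomputable def IsAltStarAlg.mulL (H : IsAltStarAlg A conj) : A →L[ℝ] A →L[ℝ] A :=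
  haveI := H.finDim
  (LinearMap.mk₂ ℝ (· * ·) H.add_mul' H.smul_mul' H.mul_add' H.mul_smul').toContinuousBilinearMap

theorem IsAltStarAlg.mulL_apply (H : IsAltStarAlg A conj) (a b : A) : H.mulL a b = a * b :=
  haveI := H.finDim
  LinearMap.toContinuousBilinearMap_apply _ a b

theorem IsHypBasis.mul_self_eq_neg_one (H : IsAltStarAlg A conj) (hv : IsHypBasis A conj v m)
    {s : ℕ} (hs : 1 ≤ s) (hsm : s ≤ m) : v s * v s = -1 := by
  have hconj : conj (v s) = -v s := eq_neg_of_add_eq_zero_right (hv.trace_zero s hs hsm)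
  have hnorm := hv.norm_one s hs hsm
  rw [hconj, ← H.mulL_apply, map_neg, H.mulL_apply] at hnorm
  rw [← hnorm, neg_neg]

theorem IsHypBasis.mul_add_mul_swap (H : IsAltStarAlg A conj) (hv : IsHypBasis A conj v m)
    (s t : Fin (m + 1)) :
    v s * v t + v t * v s = (if s = 0 then (2 : ℝ) • v t else 0) +
      (if t = 0 then (2 : ℝ) • v s else 0) - if s = t then (2 : ℝ) • (1 : A) else 0 := by
  rcases eq_or_ne s 0 with rfl | hs <;> rcases eq_or_ne t 0 with rfl | ht
  · simp [hv.v_zero, H.one_mul', two_smul]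
  · simp [hv.v_zero, H.one_mul', H.mul_one', two_smul, ht, ht.symm]
  · simp [hv.v_zero, H.one_mul', H.mul_one', two_smul, hs]
  · have hs1 : 1 ≤ (s : ℕ) := Nat.one_le_iff_ne_zero.2 (Fin.val_ne_zero_iff.2 hs)
    have ht1 : 1 ≤ (t : ℕ) := Nat.one_le_iff_ne_zero.2 (Fin.val_ne_zero_iff.2 ht)
    rcases eq_or_ne s t with rfl | hst
    · rw [hv.mul_self_eq_neg_one H hs1 s.is_le]
      simp only [hs, if_false, if_true, two_smul]
      abel
    · rw [hv.anticomm s t hs1 s.is_le ht1 t.is_le (Fin.val_ne_of_ne hst)]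
      simp [hs, ht, hst]

-- Each element `x` of `M` is a root of `X² - t(x) X + n(x)`, with `t(x) = 2 x₀`, `n(x) = ∑ x_s²`.
theorem emb_mul_self (H : IsAltStarAlg A conj) (hv : IsHypBasis A conj v m)
    (x : Fin (m + 1) → ℝ) :
    emb v m x * emb v m x = (2 * x 0) • emb v m x - (∑ s, x s ^ 2) • (1 : A) := by
  have hexpand : emb v m x * emb v m x =
      ∑ t : Fin (m + 1), ∑ s : Fin (m + 1), (x t * x s) • (v s * v t) := by
    simp only [← H.mulL_apply, emb, map_sum, map_smul, sum_apply, smul_apply, Finset.smul_sum,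
      smul_smul]
  have hswap : emb v m x * emb v m x =
      ∑ t : Fin (m + 1), ∑ s : Fin (m + 1), (x t * x s) • (v t * v s) := by
    rw [hexpand, Finset.sum_comm]
    refine Finset.sum_congr rfl fun t _ => Finset.sum_congr rfl fun s _ => ?_
    rw [mul_comm]
  refine smul_right_injective A (two_ne_zero (α := ℝ)) ?_
  calc (2 : ℝ) • (emb v m x * emb v m x)
      = ∑ t : Fin (m + 1), ∑ s : Fin (m + 1), (x t * x s) • (v t * v s + v s * v t) := by
        simp only [smul_add, Finset.sum_add_distrib]
        rw [← hexpand, ← hswap, two_smul]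
    _ = (2 : ℝ) • ((2 * x 0) • emb v m x - (∑ s, x s ^ 2) • (1 : A)) := by
        simp only [hv.mul_add_mul_swap H, smul_sub, smul_add, Finset.sum_sub_distrib,
          Finset.sum_add_distrib, smul_ite, smul_zero, Finset.sum_ite_irrel,
          Finset.sum_const_zero, Finset.sum_ite_eq, Finset.sum_ite_eq', Finset.mem_univ, if_true,
          emb, Finset.smul_sum, Finset.sum_smul, smul_smul]
        rw [← Finset.sum_add_distrib]
        simp only [← add_smul]
        ring_nf

theorem conj_emb_mul_emb_mul (H : IsAltStarAlg A conj) (hv : IsHypBasis A conj v m)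
    (x : Fin (m + 1) → ℝ) (a : A) :
    (2 * x 0) • (emb v m x * a) - emb v m x * (emb v m x * a) = (∑ s, x s ^ 2) • a := by
  rw [H.alt_left, emb_mul_self H hv, ← H.mulL_apply (_ - _), map_sub, map_smul, map_smul]
  simp only [sub_apply, smul_apply, H.mulL_apply,
    H.one_mul', sub_sub_cancel]

theorem mem_Sph_iff (H : IsAltStarAlg A conj) (hv : IsHypBasis A conj v m)
    {w : Fin (m + 1) → ℝ} :
    w ∈ Sph v m p ↔ (∀ s : Fin (m + 1), (s : ℕ) ≤ p → w s = 0) ∧ ∑ s, w s ^ 2 = 1 := by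
  refine and_congr_right fun hw => ?_
  have hone : (1 : A) ≠ 0 := hv.v_zero ▸ hv.indep.ne_zero 0
  rw [emb_mul_self H hv, hw 0 (Nat.zero_le p), mul_zero, zero_smul, zero_sub, neg_inj]
  exact (smul_left_injective ℝ hone).eq_iff' (one_smul ℝ 1)

theorem normq_mem_Sph (H : IsAltStarAlg A conj) (hv : IsHypBasis A conj v m)
    {x : Fin (m + 1) → ℝ} (hr : rad m p x ≠ 0) : normq m p x ∈ Sph v m p :=
  (mem_Sph_iff H hv).2 ⟨fun s hs => by simp [normq, xqpart, hs], sum_sq_normq hr⟩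

end Algebra

section Slice

open ContinuousLinearMap

variable {conj : A → A} {v : ℕ → A} {m p : ℕ} {w : Fin (m + 1) → ℝ}

/-- The Euclidean model of the slice coordinates `(x_p, r)`, whose own product norm is not an
inner product norm. -/
noncomputable def sliceEquiv (p : ℕ) :
    WithLp 2 (EuclideanSpace ℝ (Fin (p + 1)) × ℝ) ≃L[ℝ] (Fin (p + 1) → ℝ) × ℝ :=
  (WithLp.prodContinuousLinearEquiv 2 ℝ _ _).trans
    ((EuclideanSpace.equiv _ ℝ).prodCongr (.refl ℝ ℝ))

/-- The standard orthonormal basis of the Euclidean slice coordinates. -/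
noncomputable def sliceBasis (p : ℕ) :
    OrthonormalBasis (Fin (p + 1) ⊕ Unit) ℝ (WithLp 2 (EuclideanSpace ℝ (Fin (p + 1)) × ℝ)) :=
  (EuclideanSpace.basisFun _ ℝ).prod (OrthonormalBasis.singleton Unit ℝ)

theorem sliceEquiv_sliceBasis_inl (s : Fin (p + 1)) :
    sliceEquiv p (sliceBasis p (.inl s)) = (Pi.single s 1, 0) := by
  ext t <;> simp [sliceEquiv, sliceBasis, Pi.single_apply]

theorem sliceEquiv_sliceBasis_inr (u : Unit) :
    sliceEquiv p (sliceBasis p (.inr u)) = (0, 1) := by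
  simp [sliceEquiv, sliceBasis]

/-- The symbol of `D_ω`: `(x_p, r)` acts by left multiplication by `x_p + rω`. -/
noncomputable def sliceSymbol (H : IsAltStarAlg A conj) (v : ℕ → A) (m p : ℕ)
    (w : Fin (m + 1) → ℝ) :
    WithLp 2 (EuclideanSpace ℝ (Fin (p + 1)) × ℝ) →L[ℝ] A →L[ℝ] A :=
  H.mulL ∘L embL v m ∘L ptL m p w ∘L (sliceEquiv p : _ →L[ℝ] _)

theorem sliceSymbol_apply (H : IsAltStarAlg A conj)
    (ξ : WithLp 2 (EuclideanSpace ℝ (Fin (p + 1)) × ℝ)) (a : A) :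
    sliceSymbol H v m p w ξ a = embL v m (ptL m p w (sliceEquiv p ξ)) * a :=
  H.mulL_apply _ a

/-- Left multiplication by the conjugate `2 x₀ - x` of `x = x_p + rω`. -/
noncomputable def conjSliceSymbol (H : IsAltStarAlg A conj) (v : ℕ → A) (m p : ℕ)
    (w : Fin (m + 1) → ℝ) :
    WithLp 2 (EuclideanSpace ℝ (Fin (p + 1)) × ℝ) →L[ℝ] A →L[ℝ] A :=
  ((2 : ℝ) • (proj 0 ∘L ptL m p w ∘L (sliceEquiv p : _ →L[ℝ] _))).smulRight
      (ContinuousLinearMap.id ℝ A) -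
    sliceSymbol H v m p w

theorem isConjugateSymbol_sliceSymbol (H : IsAltStarAlg A conj) (hv : IsHypBasis A conj v m)
    (hp : p ≤ m) (hw : w ∈ Sph v m p) :
    IsConjugateSymbol (conjSliceSymbol H v m p w) (sliceSymbol H v m p w) := by
  intro ξ a
  obtain ⟨hw0, hw1⟩ := (mem_Sph_iff H hv).1 hw
  have hnorm : ‖ξ‖ ^ 2 = ∑ s, ptL m p w (sliceEquiv p ξ) s ^ 2 := by
    rw [ptL_apply, sum_sq_pt hp hw0, hw1, WithLp.prod_norm_sq_eq_of_L2, EuclideanSpace.norm_sq_eq]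
    simp [sliceEquiv]
  rw [hnorm, ← conj_emb_mul_emb_mul H hv, ← embL_apply]
  simp [conjSliceSymbol, sliceSymbol_apply]

theorem diracOp_comp_sliceEquiv (H : IsAltStarAlg A conj) (hp : p ≤ m)
    (G : (Fin (p + 1) → ℝ) × ℝ → A) (ξ : WithLp 2 (EuclideanSpace ℝ (Fin (p + 1)) × ℝ)) :
    diracOp (sliceBasis p) (sliceSymbol H v m p w) (G ∘ sliceEquiv p) ξ =
      DomCR v m p w G (sliceEquiv p ξ) := by
  simp only [diracOp, ContinuousLinearEquiv.comp_right_fderiv, Fintype.sum_sum_type,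
    sliceSymbol_apply, comp_apply, ContinuousLinearEquiv.coe_coe, sliceEquiv_sliceBasis_inl,
    sliceEquiv_sliceBasis_inr, ptL_single hp, ptL_zero_one, embL_apply, emb_single,
    Fintype.sum_unique, DomCR, DopSx, pdSx, pdSr, Fin.val_castLE]

theorem DomCR_sub (H : IsAltStarAlg A conj) (v : ℕ → A) (w : Fin (m + 1) → ℝ)
    {F G : (Fin (p + 1) → ℝ) × ℝ → A} {z : (Fin (p + 1) → ℝ) × ℝ}
    (hF : DifferentiableAt ℝ F z) (hG : DifferentiableAt ℝ G z) :
    DomCR v m p w (F - G) z = DomCR v m p w F z - DomCR v m p w G z := by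
  simp only [DomCR, DopSx, pdSx, pdSr, fderiv_sub hF hG, sub_apply, ← H.mulL_apply, map_sub,
    Finset.sum_sub_distrib]
  abel

theorem eqOn_zero_of_DomCR_eq_zero (H : IsAltStarAlg A conj) (hv : IsHypBasis A conj v m)
    (hp : p ≤ m) (hw : w ∈ Sph v m p) {G : (Fin (p + 1) → ℝ) × ℝ → A}
    {S : Set ((Fin (p + 1) → ℝ) × ℝ)} (hS : IsOpen S) (hconn : IsPreconnected S)
    (hG : ContDiffOn ℝ 1 G S) (hD : ∀ z ∈ S, DomCR v m p w G z = 0)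
    {U : Set (Fin (p + 1) → ℝ)} {φ : (Fin (p + 1) → ℝ) → (Fin (p + 1) → ℝ) × ℝ}
    (hU : IsOpen U) (hUne : U.Nonempty) (hφ : ContDiffOn ℝ 1 φ U)
    (himm : ∀ u ∈ U, Function.Injective (fderiv ℝ φ u)) (hφS : Set.MapsTo φ U S)
    (hGφ : Set.EqOn (G ∘ φ) 0 U) : Set.EqOn G 0 S := by
  have := H.finDim
  let L := sliceEquiv p
  have hzero : Set.EqOn (G ∘ L) 0 (L ⁻¹' S) := by
    refine eqOn_zero_of_vanishing_on_hypersurface (sliceBasis p)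
      (isConjugateSymbol_sliceSymbol H hv hp hw) (hS.preimage L.continuous)
      (L.toHomeomorph.isPreconnected_preimage.2 hconn)
      (hG.comp L.contDiff.contDiffOn (Set.mapsTo_preimage L S))
      (fun ξ hξ => (diracOp_comp_sliceEquiv H hp G ξ).trans (hD _ hξ))
      ?_ hU hUne (φ := L.symm ∘ φ) (L.symm.contDiff.comp_contDiffOn hφ) (fun u hu => ?_)
      (fun u hu => ?_) fun u hu => ?_
    · rw [L.toLinearEquiv.finrank_eq, Module.finrank_prod, Module.finrank_self]
    · rw [ContinuousLinearEquiv.comp_fderiv]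
      exact L.symm.injective.comp (himm u hu)
    · simpa using hφS hu
    · simpa using hGφ hu
  intro z hz
  simpa using hzero (x := L.symm z) (by simpa using hz)

theorem isOpen_sliceSet {Ω : Set (Fin (m + 1) → ℝ)} (hΩ : IsOpen Ω) (w : Fin (m + 1) → ℝ) :
    IsOpen (sliceSet m p Ω w) :=
  hΩ.preimage (ptL m p w).continuous

theorem GSM.eqOn_slice (H : IsAltStarAlg A conj) (hv : IsHypBasis A conj v m) (hp : p ≤ m)
    {Ω : Set (Fin (m + 1) → ℝ)} (hΩ : IsOpen Ω) (hconn : IsPreconnected (sliceSet m p Ω w))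
    {f g : (Fin (m + 1) → ℝ) → A} (hf : GSM v m p f Ω) (hg : GSM v m p g Ω)
    (hw : w ∈ Sph v m p) {U : Set (Fin (p + 1) → ℝ)}
    {φ : (Fin (p + 1) → ℝ) → (Fin (p + 1) → ℝ) × ℝ} (hU : IsOpen U) (hUne : U.Nonempty)
    (hφ : ContDiffOn ℝ 1 φ U) (himm : ∀ u ∈ U, Function.Injective (fderiv ℝ φ u))
    (hφΩ : Set.MapsTo φ U (sliceSet m p Ω w))
    (hfg : Set.EqOn (sliceFun m p f w ∘ φ) (sliceFun m p g w ∘ φ) U) :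
    Set.EqOn (sliceFun m p f w) (sliceFun m p g w) (sliceSet m p Ω w) := by
  have hopen := isOpen_sliceSet (p := p) hΩ w
  have hdiff {h : (Fin (m + 1) → ℝ) → A} (hh : GSM v m p h Ω) {z : (Fin (p + 1) → ℝ) × ℝ}
      (hz : z ∈ sliceSet m p Ω w) : DifferentiableAt ℝ (sliceFun m p h w) z :=
    ((hh w hw).1.differentiableOn one_ne_zero).differentiableAt (hopen.mem_nhds hz)
  have hzero : Set.EqOn (sliceFun m p f w - sliceFun m p g w) 0 (sliceSet m p Ω w) := by
    refine eqOn_zero_of_DomCR_eq_zero H hv hp hw hopen hconn ((hf w hw).1.sub (hg w hw).1)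
      (fun z hz => ?_) hU hUne hφ himm hφΩ fun u hu => sub_eq_zero.2 (hfg hu)
    rw [DomCR_sub H v w (hdiff hf hz) (hdiff hg hz), (hf w hw).2 z hz, (hg w hw).2 z hz, sub_zero]
  exact fun z hz => sub_eq_zero.1 (hzero hz)

-- The real part `{r = 0}` is common to all slices, and a hypersurface in each of them.
theorem GSM.eqOn_slice_of_eqOn_real (H : IsAltStarAlg A conj) (hv : IsHypBasis A conj v m)
    (hp : p ≤ m) {Ω : Set (Fin (m + 1) → ℝ)} (hΩ : SliceDomain v m p Ω)
    {f g : (Fin (m + 1) → ℝ) → A} (hf : GSM v m p f Ω) (hg : GSM v m p g Ω)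
    (hfg : ∀ y, injP m p y ∈ Ω → f (injP m p y) = g (injP m p y)) (hw : w ∈ Sph v m p) :
    Set.EqOn (sliceFun m p f w) (sliceFun m p g w) (sliceSet m p Ω w) := by
  obtain ⟨hopen, -, ⟨x, hx, hxq⟩, hslice⟩ := hΩ
  have hxP : injP m p (projP m p x) = x := by
    simpa only [hxq, add_zero] using injP_projP_add_xqpart m p x
  let inl := ContinuousLinearMap.inl ℝ (Fin (p + 1) → ℝ) ℝ
  refine hf.eqOn_slice H hv hp hopen (hslice w hw).isPreconnected hg hw
    (U := inl ⁻¹' sliceSet m p Ω w) (φ := inl)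
    ((isOpen_sliceSet hopen w).preimage inl.continuous) ⟨projP m p x, ?_⟩ inl.contDiff.contDiffOn
    (fun y _ => ?_) (Set.mapsTo_preimage _ _) fun y hy => ?_
  · change pt m p w (projP m p x) 0 ∈ Ω
    rwa [pt_zero_right, hxP]
  · rw [inl.fderiv]
    exact LinearMap.inl_injective
  · have hy' : pt m p w y 0 ∈ Ω := hy
    change f (pt m p w y 0) = g (pt m p w y 0)
    rw [pt_zero_right] at hy' ⊢
    exact hfg y hy'

end Slice

theorem identity_theorem_general {conj : A → A} (H : IsAltStarAlg A conj) {v : ℕ → A} {m p : ℕ}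
    (hv : IsHypBasis A conj v m) (hp : p ≤ m) {Ω : Set (Fin (m + 1) → ℝ)}
    (hΩ : SliceDomain v m p Ω) {f g : (Fin (m + 1) → ℝ) → A} (hf : GSM v m p f Ω)
    (hg : GSM v m p g Ω) {w : Fin (m + 1) → ℝ} (hw : w ∈ Sph v m p)
    {U : Set (Fin (p + 1) → ℝ)} {φ : (Fin (p + 1) → ℝ) → (Fin (p + 1) → ℝ) × ℝ}
    (hU : IsOpen U) (hUne : U.Nonempty) (hφ : ContDiffOn ℝ 1 φ U)
    (himm : ∀ u ∈ U, Function.Injective (fderiv ℝ φ u))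
    (hφΩ : Set.MapsTo φ U (sliceSet m p Ω w))
    (hfg : Set.EqOn (sliceFun m p f w ∘ φ) (sliceFun m p g w ∘ φ) U) : Set.EqOn f g Ω := by
  have hslice : Set.EqOn (sliceFun m p f w) (sliceFun m p g w) (sliceSet m p Ω w) :=
    hf.eqOn_slice H hv hp hΩ.1 (hΩ.2.2.2 w hw).isPreconnected hg hw hU hUne hφ himm hφΩ
      hfg
  have hreal : ∀ y, injP m p y ∈ Ω → f (injP m p y) = g (injP m p y) := by
    intro y hy
    rw [← pt_zero_right m p w] at hy ⊢
    exact hslice (x := (y, 0)) hy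
  intro x hx
  rcases eq_or_ne (rad m p x) 0 with hr | hr
  · have hxP : injP m p (projP m p x) = x := by
      simpa only [pt_zero_right, hr] using pt_projP_rad m p x
    rw [← hxP] at hx ⊢
    exact hreal _ hx
  · rw [← pt_projP_rad m p x] at hx ⊢
    exact hf.eqOn_slice_of_eqOn_real H hv hp hΩ hg hreal (normq_mem_Sph H hv hr)
      (x := (projP m p x, rad m p x)) hx

/-- **Identity theorem.** If two left generalized partial-slice monogenic functions
on a slice domain `Ω` agree on a `(p+1)`-dimensional smooth submanifold contained in
some slice `Ω_ω`, then they agree on all of `Ω`. -/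
theorem identity_theorem
    {A : Type*} [NormedAddCommGroup A] [NormedSpace ℝ A] [Mul A] [One A]
    (conj : A → A) (H : IsAltStarAlg A conj)
    (v : ℕ → A) (m p : ℕ) (hv : IsHypBasis A conj v m) (hp : p < m)
    (Ω : Set (Fin (m + 1) → ℝ)) (hΩ : SliceDomain v m p Ω)
    (f g : (Fin (m + 1) → ℝ) → A)
    (hf : GSM v m p f Ω) (hg : GSM v m p g Ω)
    (w : Fin (m + 1) → ℝ) (hw : w ∈ Sph v m p)
    -- a (p+1)-dimensional smooth submanifold of the slice `Ω_ω`, given by a smooth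
    -- injective immersion `φ` of a nonempty open set `U ⊆ ℝ^{p+1}`:
    (U : Set (Fin (p + 1) → ℝ)) (φ : (Fin (p + 1) → ℝ) → (Fin (p + 1) → ℝ) × ℝ)
    (hU : IsOpen U) (hUne : U.Nonempty)
    (hφ : ContDiffOn ℝ (⊤ : ℕ∞) φ U) (hφinj : Set.InjOn φ U)
    (himm : ∀ u ∈ U, Function.Injective (fderiv ℝ φ u))
    (hsub : φ '' U ⊆ sliceSet m p Ω w)
    -- `f = g` on the submanifold:
    (heq : ∀ u ∈ U, f (pt m p w (φ u).1 (φ u).2) = g (pt m p w (φ u).1 (φ u).2)) :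
    Set.EqOn f g Ω := by
  exact identity_theorem_general H hv hp.le hΩ hf hg hw hU hUne
    (hφ.of_le (by exact_mod_cast le_top)) himm (Set.mapsTo_iff_image_subset.2 hsub) heq

end GPSM
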